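/- arXiv:1311.0539 — 5 statements merged into one kernel-verified Lean document; each statement's English description precedes it below -/
import Mathlib

section
/- For every k ≥ 1 there exists a P_k-good graph with at most k²/8 + 3k edges, where P_k denotes the path with k edges. -/
open SimpleGraph

/-- A proper edge coloring of `G`: adjacent (distinct, vertex-sharing) edges get
different colors. -/
def IsProperEdgeColoring {V : Type*} (G : SimpleGraph V) (c : Sym2 V → ℕ) : Prop :=
  ∀ e₁ ∈ G.edgeSet, ∀ e₂ ∈ G.edgeSet, e₁ ≠ e₂ → (∃ v, v ∈ e₁ ∧ v ∈ e₂) → c e₁ ≠ c e₂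

/-- `G` contains a rainbow copy of `H` with respect to the edge coloring `c`:
there is an injective graph homomorphism `H → G` whose image edges receive
pairwise distinct colors. -/
def HasRainbowCopy {V W : Type*} (G : SimpleGraph V) (H : SimpleGraph W) (c : Sym2 V → ℕ) : Prop :=
  ∃ f : H →g G, Function.Injective f ∧
    ∀ e₁ ∈ H.edgeSet, ∀ e₂ ∈ H.edgeSet, c (Sym2.map f e₁) = c (Sym2.map f e₂) → e₁ = e₂

/-- `G → H`: every proper edge coloring of `G` contains a rainbow copy of `H`. -/
def ArrowsTo {V W : Type*} (G : SimpleGraph V) (H : SimpleGraph W) : Prop :=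
  ∀ c : Sym2 V → ℕ, IsProperEdgeColoring G c → HasRainbowCopy G H c

/-- The size anti-Ramsey number: the minimum number of edges of a (finite) graph
`G` with `G → H`. -/
noncomputable def ARs {W : Type*} (H : SimpleGraph W) : ℕ :=
  sInf {m | ∃ (n : ℕ) (G : SimpleGraph (Fin n)), ArrowsTo G H ∧ G.edgeSet.ncard = m}

/-- The local anti-Ramsey number: the minimum `n` such that `K_n → H`. -/
noncomputable def ARloc {W : Type*} (H : SimpleGraph W) : ℕ :=
  sInf {n | ArrowsTo (⊤ : SimpleGraph (Fin n)) H}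

/-- An `H`-good coloring of `G`: a proper edge coloring with colors in the
positive integers that contains a rainbow copy of `H`, and such that every edge
of color `i` has, for each `1 ≤ j < i`, an adjacent edge of color `j`. -/
def IsHGoodColoring {V W : Type*} (H : SimpleGraph W) (G : SimpleGraph V)
    (c : Sym2 V → ℕ) : Prop :=
  IsProperEdgeColoring G c ∧
  (∀ e ∈ G.edgeSet, 1 ≤ c e) ∧
  HasRainbowCopy G H c ∧
  ∀ e ∈ G.edgeSet, ∀ j : ℕ, 1 ≤ j → j < c e →
    ∃ e' ∈ G.edgeSet, c e' = j ∧ ∃ v, v ∈ e ∧ v ∈ e'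

/-- A graph `G` is `H`-good if it admits an `H`-good coloring. -/
def HGood {V W : Type*} (H : SimpleGraph W) (G : SimpleGraph V) : Prop :=
  ∃ c : Sym2 V → ℕ, IsHGoodColoring H G c

/-!
Give an edge of colour `k - u` the rank `u`; goodness asks that each edge meets an edge of every
higher rank `v < k`. Start from the path `0, 1, …, k` whose edge `{a, a + 1}` has rank `a`. The rank
`v` edges have to meet all path edges inside `{0, …, v}`, and a matching of about `v / 4` edges can
do so: join each even `a` with `2 * a + 2 < v` to its mirror image `v - 1 - a`. The pairs `{a, b}`
used for different `v` are different because `a + b + 1 = v`, and the at most two path vertices in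
the middle of `{0, …, v}` that are still needed are covered by pendant edges. Each added edge has an
even endpoint `a` and rank at least `2 * a - 2`, and `a` lies on edges of all positive ranks
`v ≥ 2 * a - 2`, so the added edges meet all higher ranks as well. There are at most `v / 4 + 3`
edges of rank `v`, and these bounds add up to at most `k ^ 2 / 8 + 3 * k`.
-/

section Layering

variable {V : Type*} {k : ℕ} {M : ℕ → SimpleGraph V}

/-- A decomposition of the graph `⨆ u, M u` into matchings `M 0, …, M (k - 1)` such that every edge
of `M u` meets an edge of `M v` whenever `u < v < k`. Listed in reverse order, the matchings are the
colour classes of a proper edge colouring in which each edge meets an edge of every smaller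
colour. -/
structure IsDominatingLayering (k : ℕ) (M : ℕ → SimpleGraph V) : Prop where
  lt_of_adj : ∀ {u x y}, (M u).Adj x y → u < k
  eq_of_adj : ∀ {u v x y}, (M u).Adj x y → (M v).Adj x y → u = v
  right_unique : ∀ {u x y z}, (M u).Adj x y → (M u).Adj x z → y = z
  dominates : ∀ {u v x y}, (M u).Adj x y → u < v → v < k →
    (∃ z, (M v).Adj x z) ∨ ∃ z, (M v).Adj y z

/-- The edge colouring of `⨆ u, M u` in which the edges of the layer `M u` get the colour `k - u`;
for a dominating layering, the infimum is over the one-element set `{u}`. -/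
noncomputable def layerColor (k : ℕ) (M : ℕ → SimpleGraph V) (e : Sym2 V) : ℕ :=
  k - sInf {u | e ∈ (M u).edgeSet}

lemma IsDominatingLayering.layerColor_eq (hM : IsDominatingLayering k M) {u : ℕ} {x y : V}
    (h : (M u).Adj x y) : layerColor k M s(x, y) = k - u := by
  have hu : {v | s(x, y) ∈ (M v).edgeSet} = {u} :=
    Set.eq_singleton_iff_unique_mem.2 ⟨h, fun _ hv => hM.eq_of_adj hv h⟩
  rw [layerColor, hu, csInf_singleton]

lemma IsDominatingLayering.isProperEdgeColoring (hM : IsDominatingLayering k M) :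
    IsProperEdgeColoring (⨆ u, M u) (layerColor k M) := by
  rintro e₁ h₁ e₂ h₂ hne ⟨x, hx₁, hx₂⟩ hc
  obtain ⟨y, rfl⟩ := hx₁
  obtain ⟨z, rfl⟩ := hx₂
  rw [mem_edgeSet, iSup_adj] at h₁ h₂
  obtain ⟨u, hu⟩ := h₁
  obtain ⟨v, hv⟩ := h₂
  rw [hM.layerColor_eq hu, hM.layerColor_eq hv] at hc
  have huk := hM.lt_of_adj hu
  have hvk := hM.lt_of_adj hv
  obtain rfl : u = v := by omega
  exact hne (by rw [hM.right_unique hu hv])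

lemma IsDominatingLayering.one_le_layerColor (hM : IsDominatingLayering k M) :
    ∀ e ∈ (⨆ u, M u).edgeSet, 1 ≤ layerColor k M e := by
  rintro ⟨x, y⟩ he
  obtain ⟨u, hu⟩ := iSup_adj.1 he
  have huk := hM.lt_of_adj hu
  exact (Nat.le_sub_of_add_le (by omega)).trans_eq (hM.layerColor_eq hu).symm

lemma IsDominatingLayering.exists_adjacent_edge_of_lt_layerColor (hM : IsDominatingLayering k M) :
    ∀ e ∈ (⨆ u, M u).edgeSet, ∀ j : ℕ, 1 ≤ j → j < layerColor k M e →
      ∃ e' ∈ (⨆ u, M u).edgeSet, layerColor k M e' = j ∧ ∃ v, v ∈ e ∧ v ∈ e' := by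
  rintro ⟨x, y⟩ he j hj hlt
  obtain ⟨u, hu⟩ := iSup_adj.1 he
  replace hlt : j < k - u := hlt.trans_eq (hM.layerColor_eq hu)
  have hcolor {w z : V} (h : (M (k - j)).Adj w z) : layerColor k M s(w, z) = j := by
    rw [hM.layerColor_eq h]; omega
  rcases hM.dominates hu (show u < k - j by omega) (by omega) with ⟨z, hz⟩ | ⟨z, hz⟩
  · exact ⟨s(x, z), iSup_adj.2 ⟨_, hz⟩, hcolor hz, x, Sym2.mem_mk_left x y, Sym2.mem_mk_left x z⟩
  · exact ⟨s(y, z), iSup_adj.2 ⟨_, hz⟩, hcolor hz, y, Sym2.mem_mk_right x y, Sym2.mem_mk_left y z⟩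

lemma IsDominatingLayering.hGood (hM : IsDominatingLayering k M) {W : Type*} {H : SimpleGraph W}
    (hH : HasRainbowCopy (⨆ u, M u) H (layerColor k M)) : HGood H (⨆ u, M u) :=
  ⟨layerColor k M, hM.isProperEdgeColoring, hM.one_le_layerColor, hH,
    hM.exists_adjacent_edge_of_lt_layerColor⟩

lemma IsDominatingLayering.ncard_edgeSet_iSup_le [Finite V] (hM : IsDominatingLayering k M) :
    (⨆ u, M u).edgeSet.ncard ≤ ∑ u ∈ Finset.range k, (M u).edgeSet.ncard := by
  have hsub : (⨆ u, M u).edgeSet ⊆ ⋃ u ∈ Finset.range k, (M u).edgeSet := by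
    rintro ⟨x, y⟩ he
    obtain ⟨u, hu⟩ := iSup_adj.1 he
    exact Set.mem_biUnion (Finset.mem_coe.2 (Finset.mem_range.2 (hM.lt_of_adj hu))) hu
  exact (Set.ncard_le_ncard hsub).trans (Finset.set_ncard_biUnion_le _ _)

end Layering

section RainbowPath

variable {V : Type*} {k : ℕ}

lemma exists_eq_of_mem_edgeSet_pathGraph {e : Sym2 (Fin (k + 1))}
    (he : e ∈ (pathGraph (k + 1)).edgeSet) : ∃ i : Fin k, e = s(i.castSucc, i.succ) := by
  induction e using Sym2.ind with
  | _ x y =>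
    rw [mem_edgeSet, pathGraph_adj] at he
    rcases he with h | h
    · exact ⟨⟨x, by omega⟩, congrArg₂ _ rfl (Fin.ext h.symm)⟩
    · exact ⟨⟨y, by omega⟩, Sym2.eq_swap.trans (congrArg₂ _ rfl (Fin.ext h.symm))⟩

lemma hasRainbowCopy_pathGraph {G : SimpleGraph V} {c : Sym2 V → ℕ} {p : Fin (k + 1) → V}
    (hp : Function.Injective p) (hadj : ∀ i : Fin k, G.Adj (p i.castSucc) (p i.succ))
    (hc : Function.Injective fun i : Fin k => c s(p i.castSucc, p i.succ)) :
    HasRainbowCopy G (pathGraph (k + 1)) c := by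
  have hom {x y : Fin (k + 1)} (h : (pathGraph (k + 1)).Adj x y) : G.Adj (p x) (p y) := by
    obtain ⟨i, hi⟩ := exists_eq_of_mem_edgeSet_pathGraph ((mem_edgeSet _).2 h)
    rw [← mem_edgeSet, ← Sym2.map_mk, hi]
    exact hadj i
  refine ⟨⟨p, hom⟩, hp, fun e₁ h₁ e₂ h₂ hcol => ?_⟩
  obtain ⟨i, rfl⟩ := exists_eq_of_mem_edgeSet_pathGraph h₁
  obtain ⟨j, rfl⟩ := exists_eq_of_mem_edgeSet_pathGraph h₂
  rw [hc hcol]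

lemma IsDominatingLayering.hGood_pathGraph {M : ℕ → SimpleGraph V} (hM : IsDominatingLayering k M)
    {p : Fin (k + 1) → V} (hp : Function.Injective p)
    (hadj : ∀ i : Fin k, (M i).Adj (p i.castSucc) (p i.succ)) :
    HGood (pathGraph (k + 1)) (⨆ u, M u) := by
  refine hM.hGood (hasRainbowCopy_pathGraph hp (fun i => iSup_adj.2 ⟨i, hadj i⟩) fun i j hij => ?_)
  simp only [hM.layerColor_eq (hadj _)] at hij
  exact Fin.ext (by omega)

end RainbowPath

/-- `RankEdge k u a b` says that `{a, b}`, where `a < b`, is an edge of rank `u` of the graph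
constructed for `P_k`. The path has the vertices `0, …, k`; the vertices `k + 1 + u` and
`2 * k + 1 + u` are reserved for the pendant edges of rank `u`, at path vertices `a` with
`2 * a ≤ u` and `u < 2 * a` respectively. -/
inductive RankEdge (k u a b : ℕ) : Prop
  | path (hu : u < k) (ha : a = u) (hb : b = u + 1)
  | chord (hu : u < k) (even : 2 ∣ a) (hau : 2 * a + 2 < u) (hb : a + b + 1 = u)
  | lowLeaf (hu : u < k) (hpos : 0 < u) (even : 2 ∣ a) (hau : 2 * a ≤ u) (hua : u ≤ 2 * a + 2)
      (hb : b = k + 1 + u)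
  | highLeaf (hu : u < k) (even : 2 ∣ a) (ha : 2 < a) (hua : u + 2 = 2 * a) (hb : b = 2 * k + 1 + u)

namespace RankEdge

variable {k u v a a' b b' : ℕ}

lemma rank_lt (h : RankEdge k u a b) : u < k := by cases h <;> assumption

lemma lt (h : RankEdge k u a b) : a < b := by cases h <;> omega

lemma lt_three_mul (h : RankEdge k u a b) : b < 3 * k + 1 := by cases h <;> omega

lemma rank_unique (h : RankEdge k u a b) (h' : RankEdge k v a b) : u = v := by
  cases h <;> cases h' <;> omega

lemma right_unique (h : RankEdge k u a b) (h' : RankEdge k u a b') : b = b' := by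
  cases h <;> cases h' <;> omega

lemma left_unique (h : RankEdge k u a b) (h' : RankEdge k u a' b) : a = a' := by
  cases h <;> cases h' <;> omega

lemma not_rankEdge_of_right (h : RankEdge k u a b) : ¬ RankEdge k u b b' := by
  intro h'
  cases h <;> cases h' <;> omega

end RankEdge

/-- The vertex `x` is an endpoint of an edge of rank `v`. -/
def IsCovered (k v x : ℕ) : Prop := ∃ y, RankEdge k v x y ∨ RankEdge k v y x

section IsCovered

variable {k v x : ℕ}

lemma isCovered_of_even_of_two_mul_le (hx : 2 ∣ x) (hxv : 2 * x ≤ v) (hv : 0 < v) (hvk : v < k) :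
    IsCovered k v x := by
  rcases le_or_gt v (2 * x + 2) with hle | hlt
  · exact ⟨_, .inl (.lowLeaf hvk hv hx hxv hle rfl)⟩
  · exact ⟨v - 1 - x, .inl (.chord hvk hx hlt (by omega))⟩

lemma isCovered_of_odd_add (hvx : ¬ 2 ∣ v + x) (hxv : x < v) (hvx2 : v < 2 * x) (hvk : v < k) :
    IsCovered k v x :=
  ⟨v - 1 - x, .inr (.chord hvk (by omega) (by omega) (by omega))⟩

lemma isCovered_of_even_of_odd (hx : 2 ∣ x) (hv : ¬ 2 ∣ v) (hxv : x < v) (hvk : v < k) :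
    IsCovered k v x := by
  rcases le_or_gt (2 * x) v with hle | hlt
  · exact isCovered_of_even_of_two_mul_le hx hle (by omega) hvk
  · exact isCovered_of_odd_add (by omega) hxv hlt hvk

lemma isCovered_of_add_two_eq_two_mul (hx : 2 ∣ x) (hpos : 0 < x) (hvx : v + 2 = 2 * x)
    (hvk : v < k) : IsCovered k v x := by
  rcases le_or_gt x 2 with hle | hlt
  · exact ⟨v + 1, .inl (.path hvk (by omega) rfl)⟩
  · exact ⟨_, .inl (.highLeaf hvk hx hlt hvx rfl)⟩

lemma isCovered_or_isCovered_succ (hxv : x < v) (hvk : v < k) :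
    IsCovered k v x ∨ IsCovered k v (x + 1) := by
  by_cases hx : 2 ∣ x
  · by_cases hv : 2 ∣ v
    · rcases le_or_gt (2 * x) v with hle | hlt
      · exact .inl (isCovered_of_even_of_two_mul_le hx hle (by omega) hvk)
      · exact .inr (isCovered_of_odd_add (by omega) (by omega) (by omega) hvk)
    · exact .inl (isCovered_of_even_of_odd hx hv hxv hvk)
  · have hsucc : 2 ∣ x + 1 := by omega
    by_cases hv : 2 ∣ v
    · rcases lt_trichotomy v (2 * x) with hlt | heq | hgt
      · exact .inl (isCovered_of_odd_add (by omega) hxv hlt hvk)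
      · exact .inr (isCovered_of_add_two_eq_two_mul hsucc (by omega) (by omega) hvk)
      · exact .inr (isCovered_of_even_of_two_mul_le hsucc (by omega) (by omega) hvk)
    · exact .inr (isCovered_of_even_of_odd hsucc hv (by omega) hvk)

lemma RankEdge.isCovered {u a b : ℕ} (h : RankEdge k u a b) (huv : u < v) (hvk : v < k) :
    IsCovered k v a ∨ IsCovered k v b := by
  cases h with
  | path _ ha hb =>
    subst ha hb
    exact isCovered_or_isCovered_succ huv hvk
  | chord _ even => exact .inl (isCovered_of_even_of_two_mul_le even (by omega) (by omega) hvk)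
  | lowLeaf _ _ even => exact .inl (isCovered_of_even_of_two_mul_le even (by omega) (by omega) hvk)
  | highLeaf _ even =>
    left
    by_cases hv : 2 ∣ v
    · exact isCovered_of_even_of_two_mul_le even (by omega) (by omega) hvk
    · exact isCovered_of_even_of_odd even hv (by omega) hvk

end IsCovered

section RankGraph

variable {k u : ℕ}

/-- The graph of the edges of rank `u`, on the `k + 1` path vertices and the `2 * k` vertices
reserved for pendant edges. -/
def rankGraph (k u : ℕ) : SimpleGraph (Fin (3 * k + 1)) :=
  .fromRel fun x y => RankEdge k u x y

lemma rankGraph_adj {x y : Fin (3 * k + 1)} :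
    (rankGraph k u).Adj x y ↔ RankEdge k u x y ∨ RankEdge k u y x := by
  rw [rankGraph, fromRel_adj, and_iff_right_iff_imp]
  rintro (h | h) rfl <;> exact lt_irrefl _ h.lt

lemma IsCovered.exists_rankGraph_adj {x : Fin (3 * k + 1)} (h : IsCovered k u x) :
    ∃ y, (rankGraph k u).Adj x y := by
  obtain ⟨y, h | h⟩ := h
  · exact ⟨⟨y, h.lt_three_mul⟩, rankGraph_adj.2 (.inl h)⟩
  · exact ⟨⟨y, h.lt.trans x.isLt⟩, rankGraph_adj.2 (.inr h)⟩

lemma isDominatingLayering_rankGraph (k : ℕ) : IsDominatingLayering k (rankGraph k) where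
  lt_of_adj h := (rankGraph_adj.1 h).elim RankEdge.rank_lt RankEdge.rank_lt
  eq_of_adj h h' := by
    rcases rankGraph_adj.1 h with h | h <;> rcases rankGraph_adj.1 h' with h' | h'
    · exact h.rank_unique h'
    · exact absurd h.lt h'.lt.asymm
    · exact absurd h.lt h'.lt.asymm
    · exact h.rank_unique h'
  right_unique h h' := by
    rcases rankGraph_adj.1 h with h | h <;> rcases rankGraph_adj.1 h' with h' | h'
    · exact Fin.ext (h.right_unique h')
    · exact absurd h h'.not_rankEdge_of_right
    · exact absurd h' h.not_rankEdge_of_right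
    · exact Fin.ext (h.left_unique h')
  dominates h huv hvk := by
    rcases rankGraph_adj.1 h with h | h
    · exact (h.isCovered huv hvk).imp (·.exists_rankGraph_adj) (·.exists_rankGraph_adj)
    · exact ((h.isCovered huv hvk).imp (·.exists_rankGraph_adj) (·.exists_rankGraph_adj)).symm

lemma hGood_pathGraph_iSup_rankGraph (k : ℕ) : HGood (pathGraph (k + 1)) (⨆ u, rankGraph k u) :=
  (isDominatingLayering_rankGraph k).hGood_pathGraph
    (Fin.castLE_injective (show k + 1 ≤ 3 * k + 1 by omega))
    fun i => rankGraph_adj.2 (.inl (.path i.isLt rfl rfl))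

end RankGraph

section EdgeCount

variable {k u : ℕ}

/-- A set of pairs `(a, b)` containing all edges of rank `u`. Apart from a path edge and a pendant
edge, these join an even vertex `2 * j ≤ u / 2` to its mirror image or to a leaf. -/
def rankPairs (k u : ℕ) : Finset (ℕ × ℕ) :=
  {(u, u + 1), (u / 2 + 1, 2 * k + 1 + u)} ∪ (Finset.range (u / 4 + 1)).image fun j =>
    (2 * j, if 4 * j + 2 < u then u - 1 - 2 * j else k + 1 + u)

lemma card_rankPairs_le (k u : ℕ) : (rankPairs k u).card ≤ u / 4 + 3 :=
  calc (rankPairs k u).card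
    _ ≤ 2 + (u / 4 + 1) := (Finset.card_union_le _ _).trans
        (add_le_add Finset.card_le_two (Finset.card_image_le.trans_eq (Finset.card_range _)))
    _ = u / 4 + 3 := by ring

lemma RankEdge.mem_rankPairs {a b : ℕ} (h : RankEdge k u a b) : (a, b) ∈ rankPairs k u := by
  simp only [rankPairs, Finset.mem_union, Finset.mem_insert, Finset.mem_singleton,
    Finset.mem_image, Finset.mem_range, Prod.mk.injEq]
  cases h with
  | path => omega
  | chord => exact .inr ⟨a / 2, by omega, by omega, by split_ifs <;> omega⟩
  | lowLeaf => exact .inr ⟨a / 2, by omega, by omega, by split_ifs <;> omega⟩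
  | highLeaf => omega

lemma ncard_edgeSet_rankGraph_le (k u : ℕ) : (rankGraph k u).edgeSet.ncard ≤ u / 4 + 3 := by
  have hsub : Sym2.map Fin.val '' (rankGraph k u).edgeSet ⊆
      (rankPairs k u).image fun p => s(p.1, p.2) := by
    rintro _ ⟨⟨x, y⟩, he, rfl⟩
    rw [Finset.coe_image]
    rcases rankGraph_adj.1 he with h | h
    · exact ⟨_, h.mem_rankPairs, rfl⟩
    · exact ⟨_, h.mem_rankPairs, Sym2.eq_swap⟩
  calc (rankGraph k u).edgeSet.ncard
    _ = (Sym2.map Fin.val '' (rankGraph k u).edgeSet).ncard :=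
        (Set.ncard_image_of_injective _ (Sym2.map.injective Fin.val_injective)).symm
    _ ≤ ((rankPairs k u).image fun p => s(p.1, p.2)).card := by
        rw [← Set.ncard_coe_finset]
        exact Set.ncard_le_ncard hsub (Finset.finite_toSet _)
    _ ≤ u / 4 + 3 := Finset.card_image_le.trans (card_rankPairs_le k u)

lemma eight_mul_sum_div_four_add_three_le (k : ℕ) :
    8 * ∑ u ∈ Finset.range k, (u / 4 + 3) ≤ k ^ 2 + 24 * k := by
  induction k with
  | zero => rfl
  | succ k ih =>
    rw [Finset.sum_range_succ, mul_add]
    have hdiv : 8 * (k / 4) ≤ 2 * k := by omega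
    linarith

lemma eight_mul_ncard_edgeSet_iSup_rankGraph_le (k : ℕ) :
    8 * (⨆ u, rankGraph k u).edgeSet.ncard ≤ k ^ 2 + 24 * k :=
  calc 8 * (⨆ u, rankGraph k u).edgeSet.ncard
    _ ≤ 8 * ∑ u ∈ Finset.range k, (rankGraph k u).edgeSet.ncard :=
        Nat.mul_le_mul_left 8 (isDominatingLayering_rankGraph k).ncard_edgeSet_iSup_le
    _ ≤ 8 * ∑ u ∈ Finset.range k, (u / 4 + 3) :=
        Nat.mul_le_mul_left 8 (Finset.sum_le_sum fun u _ => ncard_edgeSet_rankGraph_le k u)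
    _ ≤ k ^ 2 + 24 * k := eight_mul_sum_div_four_add_three_le k

end EdgeCount

theorem stmt_15 (k : ℕ) (hk : 1 ≤ k) :
    ∃ (n : ℕ) (G : SimpleGraph (Fin n)), HGood (SimpleGraph.pathGraph (k + 1)) G ∧
      (G.edgeSet.ncard : ℝ) ≤ (k : ℝ) ^ 2 / 8 + 3 * k := by
  refine ⟨3 * k + 1, ⨆ u, rankGraph k u, hGood_pathGraph_iSup_rankGraph k, ?_⟩
  have hcard : (8 : ℝ) * (⨆ u, rankGraph k u).edgeSet.ncard ≤ (k : ℝ) ^ 2 + 24 * k := by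
    exact_mod_cast eight_mul_ncard_edgeSet_iSup_rankGraph_le k
  linarith
end

section
/- For every k ≥ 3 there exists a C_k-good graph with at most k²/8 + 7k edges, where C_k denotes the cycle with k edges. -/
open SimpleGraph

/-!
Read the colors of a good coloring backwards, as times: the edges of time `t` form a matching
`M t`, and every edge has to touch `M t` for all later `t`. The edges of a path, one time step
after another, are rainbow, but each touches only the next one. So every second path vertex is made
a hub: the hub `u` is joined to the path vertices `v ≥ u + 2` at time `u + v`, through which the
odd end of a path edge sees even times and the even end odd times, and to four apices that fill
the gaps around time `2 * u`; from then on the hub sees every time. The cycle is a stretch of the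
path closed by a hub edge. The hub edges of time at most `k + 9` are pairs `u < v` with `u` odd and
`u + v ≤ k + 9`, about `k ^ 2 / 8` of them, whereas the numbers of path edges and apex edges are
linear in `k`.
-/

section ReverseGreedy

variable {V W : Type*} {M : ℕ → SimpleGraph V} {N t : ℕ} {a b : V}

theorem isProperEdgeColoring_of_adj {G : SimpleGraph V} {c : Sym2 V → ℕ}
    (h : ∀ v a b, G.Adj v a → G.Adj v b → c s(v, a) = c s(v, b) → a = b) :
    IsProperEdgeColoring G c := by
  rintro _ h₁ _ h₂ hne ⟨v, ⟨a, rfl⟩, ⟨b, rfl⟩⟩ hc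
  exact hne (congrArg (s(v, ·)) (h v a b h₁ h₂ hc))

/-- A sequence of pairwise disjoint matchings such that each edge of `M s` touches `M t` whenever
`s < t ≤ N`: the color classes of a greedy coloring with colors at most `N + 1`, listed from the
last color to the first. -/
structure IsReverseGreedy (M : ℕ → SimpleGraph V) (N : ℕ) : Prop where
  pairwise_disjoint : Pairwise fun s t ↦ Disjoint (M s) (M t)
  subsingleton_neighborSet (t : ℕ) (v : V) : ((M t).neighborSet v).Subsingleton
  mem_support_or {s t : ℕ} {a b : V} (hab : (M s).Adj a b) (hst : s < t) (htN : t ≤ N) :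
    a ∈ (M t).support ∨ b ∈ (M t).support

/-- The coloring of `⨆ t ≤ N, M t` that gives the edges of `M t` the color `N + 1 - t`. The infimum
picks out the only `t` whose matching contains the edge. -/
noncomputable def reverseColoring (M : ℕ → SimpleGraph V) (N : ℕ) (e : Sym2 V) : ℕ :=
  N + 1 - sInf {t | e ∈ (M t).edgeSet}

theorem iSup_le_adj : (⨆ t ≤ N, M t).Adj a b ↔ ∃ t ≤ N, (M t).Adj a b := by
  simp only [iSup_adj, exists_prop]

namespace IsReverseGreedy

theorem reverseColoring_eq (hM : IsReverseGreedy M N) (h : (M t).Adj a b) :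
    reverseColoring M N s(a, b) = N + 1 - t := by
  have times_eq : {s | s(a, b) ∈ (M s).edgeSet} = {t} := by
    refine Set.eq_singleton_iff_unique_mem.2 ⟨h, fun s hs ↦ ?_⟩
    by_contra hst
    exact Set.disjoint_left.1 (disjoint_edgeSet.2 (hM.pairwise_disjoint hst)) hs h
  rw [reverseColoring, times_eq, csInf_singleton]

theorem isProperEdgeColoring (hM : IsReverseGreedy M N) :
    IsProperEdgeColoring (⨆ t ≤ N, M t) (reverseColoring M N) := by
  refine isProperEdgeColoring_of_adj fun v a b ha hb hc ↦ ?_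
  obtain ⟨s, hs, ha⟩ := iSup_le_adj.1 ha
  obtain ⟨t, ht, hb⟩ := iSup_le_adj.1 hb
  rw [hM.reverseColoring_eq ha, hM.reverseColoring_eq hb] at hc
  obtain rfl : s = t := by omega
  exact hM.subsingleton_neighborSet s v ha hb

theorem exists_mem_edgeSet_of_mem_support (hM : IsReverseGreedy M N) (ht : t ≤ N)
    (ha : a ∈ (M t).support) :
    ∃ e ∈ (⨆ t ≤ N, M t).edgeSet, reverseColoring M N e = N + 1 - t ∧ a ∈ e := by
  obtain ⟨w, hw⟩ := ha
  exact ⟨s(a, w), iSup_le_adj.2 ⟨t, ht, hw⟩, hM.reverseColoring_eq hw, Sym2.mem_mk_left a w⟩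

theorem isHGoodColoring (hM : IsReverseGreedy M N) {H : SimpleGraph W}
    (hH : HasRainbowCopy (⨆ t ≤ N, M t) H (reverseColoring M N)) :
    IsHGoodColoring H (⨆ t ≤ N, M t) (reverseColoring M N) := by
  refine ⟨hM.isProperEdgeColoring, ?_, hH, ?_⟩
  · rintro ⟨a, b⟩ hab
    obtain ⟨t, ht, hab⟩ := iSup_le_adj.1 hab
    rw [hM.reverseColoring_eq hab]
    omega
  · rintro ⟨a, b⟩ hab j hj hjc
    obtain ⟨t, ht, hab⟩ := iSup_le_adj.1 hab
    rw [hM.reverseColoring_eq hab] at hjc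
    have hcolor : N + 1 - (N + 1 - j) = j := by omega
    rcases hM.mem_support_or hab (t := N + 1 - j) (by omega) (by omega) with h | h <;>
      obtain ⟨e, he, hc, hmem⟩ := hM.exists_mem_edgeSet_of_mem_support (by omega) h
    · exact ⟨e, he, hc.trans hcolor, a, Sym2.mem_mk_left a b, hmem⟩
    · exact ⟨e, he, hc.trans hcolor, b, Sym2.mem_mk_right a b, hmem⟩

end IsReverseGreedy

theorem exists_eq_of_mem_edgeSet_cycleGraph {n : ℕ} {e : Sym2 (Fin (n + 2))}
    (he : e ∈ (cycleGraph (n + 2)).edgeSet) : ∃ i, e = s(i, i + 1) := by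
  induction e with | _ u v =>
  rcases cycleGraph_adj.1 he with h | h
  · exact ⟨v, by rw [← sub_eq_iff_eq_add'.1 h, Sym2.eq_swap]⟩
  · exact ⟨u, by rw [← sub_eq_iff_eq_add'.1 h]⟩

theorem hasRainbowCopy_cycleGraph {G : SimpleGraph V} {c : Sym2 V → ℕ} {n : ℕ}
    {p : Fin (n + 2) → V} (hp : Function.Injective p) (hadj : ∀ i, G.Adj (p i) (p (i + 1)))
    (hc : Function.Injective fun i ↦ c s(p i, p (i + 1))) :
    HasRainbowCopy G (cycleGraph (n + 2)) c := by
  have map_adj {u v} (huv : (cycleGraph (n + 2)).Adj u v) : G.Adj (p u) (p v) := by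
    obtain ⟨i, hi⟩ := exists_eq_of_mem_edgeSet_cycleGraph ((mem_edgeSet _).2 huv)
    have map_mem : Sym2.map p s(u, v) ∈ G.edgeSet := hi ▸ hadj i
    exact map_mem
  refine ⟨⟨p, map_adj⟩, hp, fun e₁ he₁ e₂ he₂ h ↦ ?_⟩
  obtain ⟨i, rfl⟩ := exists_eq_of_mem_edgeSet_cycleGraph he₁
  obtain ⟨j, rfl⟩ := exists_eq_of_mem_edgeSet_cycleGraph he₂
  rw [hc h]

theorem IsReverseGreedy.hasRainbowCopy_cycleGraph (hM : IsReverseGreedy M N) {n : ℕ}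
    {p : Fin (n + 2) → V} (hp : Function.Injective p) {τ : Fin (n + 2) → ℕ}
    (hτ : Function.Injective τ) (hτN : ∀ i, τ i ≤ N)
    (hadj : ∀ i, (M (τ i)).Adj (p i) (p (i + 1))) :
    HasRainbowCopy (⨆ t ≤ N, M t) (cycleGraph (n + 2)) (reverseColoring M N) := by
  refine _root_.hasRainbowCopy_cycleGraph hp (fun i ↦ iSup_le_adj.2 ⟨τ i, hτN i, hadj i⟩) ?_
  intro i j hij
  simp only [hM.reverseColoring_eq (hadj _)] at hij
  have := hτN i
  have := hτN j
  exact hτ (by omega)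

end ReverseGreedy

section TimedMatching

variable {a b s t u v : ℕ}

/-- The edge from `u` to `v > u` of the infinite timed graph is present at time `t`. The vertices
from `5` on form the path, those of them that are odd are the hubs, and `0`, `2`, `3`, `4` are the
apices; `1` is isolated, so that the apex `u` meets the hub `v` exactly `u` steps
after time `2 * v - 3`. The disjuncts are the path, hub and apex edges. -/
def TimedArc (t u v : ℕ) : Prop :=
  (5 ≤ u ∧ v = u + 1 ∧ t = u + 3) ∨
  (5 ≤ u ∧ u % 2 = 1 ∧ u + 2 ≤ v ∧ t = u + v) ∨
  (u ≤ 4 ∧ u ≠ 1 ∧ 5 ≤ v ∧ v % 2 = 1 ∧ t + 3 = 2 * v + u)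

/-- The matching formed by the edges of the infinite timed graph of time `t`. -/
def timedMatching (t : ℕ) : SimpleGraph ℕ :=
  SimpleGraph.fromRel (TimedArc t)

theorem TimedArc.lt (h : TimedArc t u v) : u < v := by
  unfold TimedArc at h
  omega

theorem TimedArc.le_time (h : TimedArc t u v) : v ≤ t := by
  unfold TimedArc at h
  omega

theorem timedMatching_adj : (timedMatching t).Adj a b ↔ TimedArc t a b ∨ TimedArc t b a := by
  rw [timedMatching, fromRel_adj, and_iff_right_of_imp]
  rintro (h | h)
  exacts [h.lt.ne, h.lt.ne']

theorem le_of_timedMatching_adj (h : (timedMatching t).Adj a b) : b ≤ t := by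
  rcases timedMatching_adj.1 h with h | h
  exacts [h.le_time, h.lt.le.trans h.le_time]

theorem eq_of_timedMatching_adj (hs : (timedMatching s).Adj a b)
    (ht : (timedMatching t).Adj a b) : s = t := by
  simp only [timedMatching_adj, TimedArc] at hs ht
  omega

/- An odd `v` has path edges at times at most `v + 3`, edges to earlier hubs at even times from
`v + 5` to `2 * v - 2`, apex edges at times `2 * v - 3`, `2 * v - 1`, `2 * v`, `2 * v + 1`, and
edges to later vertices from time `2 * v + 2` on. An even `v` has only path and hub edges. -/
theorem subsingleton_neighborSet_timedMatching (t v : ℕ) :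
    ((timedMatching t).neighborSet v).Subsingleton := by
  intro a ha b hb
  simp only [mem_neighborSet, timedMatching_adj, TimedArc] at ha hb
  omega

theorem mem_support_timedMatching (v : ℕ) :
    v ∈ (timedMatching t).support ↔ ∃ w, TimedArc t v w ∨ TimedArc t w v := by
  simp only [mem_support, timedMatching_adj]

theorem mem_support_timedMatching_of_odd (hv : 5 ≤ v) (hodd : v % 2 = 1) (ht : 2 * v ≤ t + 3) :
    v ∈ (timedMatching t).support := by
  rw [mem_support_timedMatching]
  unfold TimedArc
  rcases (by omega : 2 * v + 2 ≤ t ∨ t + 2 = 2 * v ∧ v = 5 ∨ t + 2 = 2 * v ∧ 7 ≤ v ∨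
    t + 2 ≠ 2 * v ∧ t ≤ 2 * v + 1) with h | h | h | h
  · exact ⟨t - v, by omega⟩
  · exact ⟨6, by omega⟩
  · exact ⟨v - 2, by omega⟩
  · exact ⟨t + 3 - 2 * v, by omega⟩

theorem mem_support_timedMatching_of_odd_sub (hvt : v + 5 ≤ t) (hodd : (t - v) % 2 = 1)
    (htv : t + 2 ≤ 2 * v) : v ∈ (timedMatching t).support := by
  rw [mem_support_timedMatching]
  unfold TimedArc
  exact ⟨t - v, by omega⟩

theorem mem_support_timedMatching_or_succ (hu : 5 ≤ u) (ht : u + 3 < t) :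
    u ∈ (timedMatching t).support ∨ u + 1 ∈ (timedMatching t).support := by
  obtain rfl | ht : t = u + 4 ∨ u + 5 ≤ t := by omega
  · exact .inr ((mem_support_timedMatching _).2 ⟨u + 2, by unfold TimedArc; omega⟩)
  have hub_or_early : (u % 2 = 1 ∧ 2 * u ≤ t + 3) ∨ ((u + 1) % 2 = 1 ∧ 2 * (u + 1) ≤ t + 3) ∨
      ((t - u) % 2 = 1 ∧ t + 2 ≤ 2 * u) ∨
      (u + 6 ≤ t ∧ (t - (u + 1)) % 2 = 1 ∧ t + 2 ≤ 2 * (u + 1)) := by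
    omega
  rcases hub_or_early with h | h | h | h
  · exact .inl (mem_support_timedMatching_of_odd hu h.1 h.2)
  · exact .inr (mem_support_timedMatching_of_odd (by omega) h.1 h.2)
  · exact .inl (mem_support_timedMatching_of_odd_sub ht h.1 h.2)
  · exact .inr (mem_support_timedMatching_of_odd_sub h.1 h.2.1 h.2.2)

theorem TimedArc.mem_support_or (h : TimedArc s u v) (hst : s < t) :
    u ∈ (timedMatching t).support ∨ v ∈ (timedMatching t).support := by
  rcases h with ⟨hu, rfl, rfl⟩ | ⟨hu, hodd, hv, rfl⟩ | ⟨-, -, hv, hodd, hs⟩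
  · exact mem_support_timedMatching_or_succ hu hst
  · exact .inl (mem_support_timedMatching_of_odd hu hodd (by omega))
  · exact .inr (mem_support_timedMatching_of_odd hv hodd (by omega))

theorem mem_support_timedMatching_or (h : (timedMatching s).Adj a b) (hst : s < t) :
    a ∈ (timedMatching t).support ∨ b ∈ (timedMatching t).support := by
  rcases timedMatching_adj.1 h with h | h
  exacts [h.mem_support_or hst, (h.mem_support_or hst).symm]

end TimedMatching

section FiniteGraph

variable {k t : ℕ}

/-- The matching `timedMatching t` on the vertices below `k + 10`; these carry all edges of
time at most `k + 9`. -/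
def finTimedMatching (k t : ℕ) : SimpleGraph (Fin (k + 10)) :=
  (timedMatching t).comap Fin.val

/-- The graph of all edges of time at most `k + 9`; the cycle of length `k` on the path vertices
`5, …, k + 4` is closed at time `5 + (k + 4) = k + 9`. -/
def cycleGoodGraph (k : ℕ) : SimpleGraph (Fin (k + 10)) :=
  ⨆ t ≤ k + 9, finTimedMatching k t

theorem mem_support_finTimedMatching (ht : t ≤ k + 9) {a : Fin (k + 10)} :
    a ∈ (finTimedMatching k t).support ↔ (a : ℕ) ∈ (timedMatching t).support := by
  refine ⟨fun ⟨w, hw⟩ ↦ ⟨w, hw⟩, fun ⟨w, hw⟩ ↦ ?_⟩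
  exact ⟨⟨w, by have := le_of_timedMatching_adj hw; omega⟩, hw⟩

theorem isReverseGreedy_finTimedMatching (k : ℕ) :
    IsReverseGreedy (finTimedMatching k) (k + 9) where
  pairwise_disjoint s t hst := by
    refine disjoint_edgeSet.1 (Set.disjoint_left.2 ?_)
    rintro ⟨a, b⟩ hs ht
    exact hst (eq_of_timedMatching_adj hs ht)
  subsingleton_neighborSet t v _ ha _ hb :=
    Fin.ext (subsingleton_neighborSet_timedMatching t v ha hb)
  mem_support_or hab hst ht := by
    simpa only [mem_support_finTimedMatching ht] using mem_support_timedMatching_or hab hst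

theorem hasRainbowCopy_cycleGoodGraph (hk : 3 ≤ k) :
    HasRainbowCopy (cycleGoodGraph k) (cycleGraph k)
      (reverseColoring (finTimedMatching k) (k + 9)) := by
  obtain ⟨n, rfl⟩ : ∃ n, k = n + 2 := ⟨k - 2, by omega⟩
  let p (i : Fin (n + 2)) : Fin (n + 2 + 10) := ⟨i + 5, by omega⟩
  let τ (i : Fin (n + 2)) : ℕ := if i = Fin.last (n + 1) then n + 11 else i + 8
  refine (isReverseGreedy_finTimedMatching (n + 2)).hasRainbowCopy_cycleGraph (p := p) (τ := τ)
    ?_ ?_ ?_ ?_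
  · intro i j hij
    simp only [p, Fin.mk.injEq] at hij
    omega
  · intro i j hij
    simp only [τ, Fin.ext_iff, Fin.val_last] at hij ⊢
    split_ifs at hij <;> omega
  · intro i
    simp only [τ]
    split_ifs <;> omega
  · intro i
    change (timedMatching (τ i)).Adj (p i) (p (i + 1))
    simp only [timedMatching_adj, TimedArc, τ, p, Fin.val_add_one, Fin.ext_iff, Fin.val_last]
    split_ifs <;> omega

theorem hGood_cycleGoodGraph (hk : 3 ≤ k) : HGood (cycleGraph k) (cycleGoodGraph k) :=
  ⟨_, (isReverseGreedy_finTimedMatching k).isHGoodColoring (hasRainbowCopy_cycleGoodGraph hk)⟩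

end FiniteGraph

section EdgeCount

theorem eight_mul_sub_two_add_sq_le (m : ℕ) : 8 * (m - 2) + (m - 4) ^ 2 ≤ m ^ 2 := by
  rcases lt_or_ge m 4 with h | h
  · interval_cases m <;> norm_num
  · obtain ⟨m, rfl⟩ := Nat.exists_eq_add_of_le' h
    rw [show m + 4 - 2 = m + 2 by omega, Nat.add_sub_cancel]
    linarith

theorem eight_mul_sum_range_le (m n : ℕ) :
    8 * ∑ i ∈ Finset.range n, (m - 2 - 4 * i) ≤ m ^ 2 := by
  suffices 8 * ∑ i ∈ Finset.range n, (m - 2 - 4 * i) + (m - 4 * n) ^ 2 ≤ m ^ 2 by omega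
  induction n with
  | zero => simp
  | succ n ih =>
    have telescope := eight_mul_sub_two_add_sq_le (m - 4 * n)
    rw [Finset.sum_range_succ, Nat.sub_right_comm m 2,
      show m - 4 * (n + 1) = m - 4 * n - 4 by omega]
    linarith

/-- The path edges `(u, v)`, `u < v`, of time `u + 3 ≤ k + 9`. -/
def pathArcs (k : ℕ) : Finset (ℕ × ℕ) :=
  (Finset.Ico 5 (k + 7)).image fun u ↦ (u, u + 1)

/-- The hub edges `(u, v)`, `u + 2 ≤ v`, of time `u + v ≤ k + 9`; the hub is `u = 2 * i + 5`. -/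
def hubArcs (k : ℕ) : Finset (ℕ × ℕ) :=
  (Finset.range k).biUnion fun i ↦ {2 * i + 5} ×ˢ Finset.Ico (2 * i + 7) (k + 5 - 2 * i)

/-- Pairs `(u, v)` of an apex `u` and a hub `v = 2 * i + 5` that include the apex edges of time
`2 * v + u - 3 ≤ k + 9`; all four apices get the range of `v` that is right for `u = 0`. -/
def apexArcs (k : ℕ) : Finset (ℕ × ℕ) :=
  {0, 2, 3, 4} ×ˢ (Finset.range ((k + 2) / 4 + 1)).image fun i ↦ 2 * i + 5

theorem card_pathArcs_le (k : ℕ) : (pathArcs k).card ≤ k + 2 :=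
  Finset.card_image_le.trans_eq (Nat.card_Ico 5 (k + 7))

theorem eight_mul_card_hubArcs_le (k : ℕ) : 8 * (hubArcs k).card ≤ k ^ 2 := by
  calc
    8 * (hubArcs k).card ≤ 8 * ∑ i ∈ Finset.range k, (k - 2 - 4 * i) := by
      gcongr
      refine Finset.card_biUnion_le.trans (Finset.sum_le_sum fun i _ ↦ ?_)
      rw [Finset.card_product, Finset.card_singleton, Nat.card_Ico]
      omega
    _ ≤ k ^ 2 := eight_mul_sum_range_le k k

theorem card_apexArcs_le (k : ℕ) : (apexArcs k).card ≤ k + 6 := by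
  have := Finset.card_image_le (s := Finset.range ((k + 2) / 4 + 1)) (f := fun i ↦ 2 * i + 5)
  rw [Finset.card_range] at this
  rw [apexArcs, Finset.card_product, show ({0, 2, 3, 4} : Finset ℕ).card = 4 from rfl]
  omega

theorem TimedArc.mem_arcs {k t u v : ℕ} (h : TimedArc t u v) (ht : t ≤ k + 9) :
    (u, v) ∈ pathArcs k ∪ hubArcs k ∪ apexArcs k := by
  simp only [pathArcs, hubArcs, apexArcs, Finset.mem_union, Finset.mem_image, Finset.mem_biUnion,
    Finset.mem_product, Finset.mem_Ico, Finset.mem_range, Finset.mem_insert, Finset.mem_singleton,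
    Prod.mk.injEq]
  rcases h with h | h | h
  · exact .inl (.inl ⟨u, by omega⟩)
  · exact .inl (.inr ⟨(u - 5) / 2, by omega⟩)
  · exact .inr ⟨by omega, (v - 5) / 2, by omega⟩

theorem ncard_edgeSet_cycleGoodGraph_le_card_arcs (k : ℕ) :
    (cycleGoodGraph k).edgeSet.ncard ≤ (pathArcs k ∪ hubArcs k ∪ apexArcs k).card := by
  set arcs := pathArcs k ∪ hubArcs k ∪ apexArcs k
  have image_subset : Sym2.map Fin.val '' (cycleGoodGraph k).edgeSet ⊆
      arcs.image fun p ↦ s(p.1, p.2) := by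
    rintro _ ⟨⟨a, b⟩, hab, rfl⟩
    obtain ⟨t, ht, hab⟩ := iSup_le_adj.1 hab
    rw [Finset.mem_coe, Finset.mem_image]
    rcases timedMatching_adj.1 hab with h | h
    exacts [⟨_, h.mem_arcs ht, rfl⟩, ⟨_, h.mem_arcs ht, Sym2.eq_swap⟩]
  calc
    (cycleGoodGraph k).edgeSet.ncard
      = (Sym2.map Fin.val '' (cycleGoodGraph k).edgeSet).ncard :=
        (Set.ncard_image_of_injective _ (Sym2.map.injective Fin.val_injective)).symm
    _ ≤ (arcs.image fun p ↦ s(p.1, p.2)).card :=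
        (Set.ncard_le_ncard image_subset (Finset.finite_toSet _)).trans_eq (Set.ncard_coe_finset _)
    _ ≤ arcs.card := Finset.card_image_le

theorem eight_mul_ncard_edgeSet_cycleGoodGraph_le (k : ℕ) :
    8 * (cycleGoodGraph k).edgeSet.ncard ≤ (k + 8) ^ 2 := by
  have card_union := Finset.card_union_le (pathArcs k ∪ hubArcs k) (apexArcs k)
  have card_union' := Finset.card_union_le (pathArcs k) (hubArcs k)
  linarith [ncard_edgeSet_cycleGoodGraph_le_card_arcs k, card_pathArcs_le k,
    eight_mul_card_hubArcs_le k, card_apexArcs_le k]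

end EdgeCount

theorem stmt_16 (k : ℕ) (hk : 3 ≤ k) :
    ∃ (n : ℕ) (G : SimpleGraph (Fin n)), HGood (SimpleGraph.cycleGraph k) G ∧
      (G.edgeSet.ncard : ℝ) ≤ (k : ℝ) ^ 2 / 8 + 7 * k := by
  refine ⟨k + 10, cycleGoodGraph k, hGood_cycleGoodGraph hk, ?_⟩
  have hcard : (8 : ℝ) * (cycleGoodGraph k).edgeSet.ncard ≤ ((k : ℝ) + 8) ^ 2 := by
    exact_mod_cast eight_mul_ncard_edgeSet_cycleGoodGraph_le k
  have hk' : (3 : ℝ) ≤ k := by exact_mod_cast hk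
  linarith
end

section
/- For every k ≥ 1: every M_k-good graph has at least k²/4 edges, and there exists a bipartite M_k-good graph with at most k²/4 + k edges, where M_k denotes the matching with k edges. -/
open SimpleGraph

/-- The matching `M_k` with `k` pairwise disjoint edges, on vertex set `Fin (2k)`:
vertices `2i` and `2i+1` are matched. -/
def matchingGraph (k : ℕ) : SimpleGraph (Fin (2 * k)) :=
  SimpleGraph.fromRel (fun v w => v.val / 2 = w.val / 2)

/-! *Lower bound.* A rainbow copy of a graph `H` with `m` edges uses `m` distinct positive colors,
whose sum is at least `m (m + 1) / 2`. In a good coloring an edge of color `i` meets at least `i`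
edges, itself included, while no edge of `G` meets more than `2 Δ(H)` edges of the copy. Counting
the incidences between the copy and `G` gives `m (m + 1) ≤ 4 Δ(H) |E(G)|`; for `H = M_k` take
`m = k` and `Δ(H) = 1`.

*Upper bound.* For `i, j < k`, give the matching edge `a_j b_j` the color `j + 1`, and whenever
`i < j` and `k ≤ i + j` add the edge `a_i b_j` with color `i + j + 1 - k`. These supply the positive
colors among `1, …, 2 j - k` at `b_j` and among `2 j + 2 - k, …, j` at `a_j`, so each added edge
serves two matching edges. The one missing color `2 j + 1 - k`, if positive, is supplied at `b_j` by
an edge to one further vertex, common to all `j`. -/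

section LowerBound

open Finset Function

variable {V W : Type*} {G : SimpleGraph V} {H : SimpleGraph W} {c : Sym2 V → ℕ}

lemma card_mul_succ_le_two_mul_sum {ι : Type*} {s : Finset ι} {f : ι → ℕ} (hf : Set.InjOn f s)
    (hpos : ∀ i ∈ s, 1 ≤ f i) : #s * (#s + 1) ≤ 2 * ∑ i ∈ s, f i := by
  have hinj : Set.InjOn (fun i ↦ (f i : ℤ)) s := Nat.cast_injective.comp_injOn hf
  have hsum : ∑ n ∈ range #s, ((1 : ℤ) + n) ≤ ∑ i ∈ s, (f i : ℤ) := by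
    rw [← card_image_of_injOn hinj, ← sum_image (f := fun z : ℤ ↦ z) hinj]
    exact sum_range_le_sum (by simpa using hpos)
  have hgauss : (#s + 1) * #s = 2 * ∑ n ∈ range #s, (1 + n) := by
    have := sum_range_id_mul_two (#s + 1)
    rw [sum_range_succ'] at this
    simp only [add_comm 1]
    grind
  have : ∑ n ∈ range #s, (1 + n) ≤ ∑ i ∈ s, f i := mod_cast hsum
  grind

open scoped Classical in
lemma IsHGoodColoring.color_le_card_edges_meeting [Fintype G.edgeSet] (hc : IsHGoodColoring H G c)
    {e : Sym2 V} (he : e ∈ G.edgeSet) : c e ≤ #{e' ∈ G.edgeFinset | ∃ v, v ∈ e ∧ v ∈ e'} := by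
  obtain ⟨-, -, -, hgood⟩ := hc
  have hcolors : Icc 1 (c e) ⊆ image c {e' ∈ G.edgeFinset | ∃ v, v ∈ e ∧ v ∈ e'} := by
    intro j hj
    obtain ⟨hj, hje⟩ := mem_Icc.1 hj
    simp only [mem_image, mem_filter, SimpleGraph.mem_edgeFinset]
    obtain rfl | hlt := hje.eq_or_lt
    · exact ⟨e, ⟨he, e.out.1, e.out_fst_mem, e.out_fst_mem⟩, rfl⟩
    · obtain ⟨e', he', hcol, hmeet⟩ := hgood e he j hj hlt
      exact ⟨e', ⟨he', hmeet⟩, hcol⟩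
  simpa using (card_le_card hcolors).trans card_image_le

variable [Fintype H.edgeSet] [H.LocallyFinite] {Δ : ℕ} {f : W → V}

open scoped Classical in
lemma card_edges_map_through_le (hΔ : ∀ w, H.degree w ≤ Δ) (hf : Injective f) (v : V) :
    #{d ∈ H.edgeFinset | v ∈ Sym2.map f d} ≤ Δ := by
  by_cases hv : v ∈ Set.range f
  · obtain ⟨w, rfl⟩ := hv
    simpa only [Sym2.mem_map, hf.eq_iff, exists_eq_right, ← H.incidenceFinset_eq_filter,
      H.card_incidenceFinset_eq_degree] using hΔ w
  · rw [filter_false_of_mem fun d _ hd ↦ hv ?_, card_empty]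
    · exact Nat.zero_le Δ
    · obtain ⟨w, -, hw⟩ := Sym2.mem_map.1 hd
      exact ⟨w, hw⟩

open scoped Classical in
lemma card_edges_map_meeting_le (hΔ : ∀ w, H.degree w ≤ Δ) (hf : Injective f) (e : Sym2 V) :
    #{d ∈ H.edgeFinset | ∃ v, v ∈ Sym2.map f d ∧ v ∈ e} ≤ 2 * Δ := by
  induction e with
  | _ x y =>
  calc #{d ∈ H.edgeFinset | ∃ v, v ∈ Sym2.map f d ∧ v ∈ s(x, y)}
      = #({d ∈ H.edgeFinset | x ∈ Sym2.map f d} ∪ {d ∈ H.edgeFinset | y ∈ Sym2.map f d}) := by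
        congr 1 with d
        grind
    _ ≤ Δ + Δ := (card_union_le _ _).trans <| add_le_add
        (card_edges_map_through_le hΔ hf x) (card_edges_map_through_le hΔ hf y)
    _ = 2 * Δ := (two_mul Δ).symm

theorem HGood.card_edgeFinset_mul_succ_le [Fintype G.edgeSet] (hG : HGood H G)
    (hΔ : ∀ w, H.degree w ≤ Δ) :
    #H.edgeFinset * (#H.edgeFinset + 1) ≤ 4 * Δ * #G.edgeFinset := by
  classical
  obtain ⟨c, hc⟩ := hG
  have ⟨_, hpos, ⟨f, hf, hrainbow⟩, _⟩ := hc
  have hmap : ∀ d ∈ H.edgeFinset, Sym2.map f d ∈ G.edgeSet := fun d hd ↦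
    f.map_mem_edgeSet (SimpleGraph.mem_edgeFinset.1 hd)
  have hinj : Set.InjOn (fun d ↦ c (Sym2.map f d)) H.edgeFinset := fun d hd d' hd' ↦
    hrainbow d (by simpa using hd) d' (by simpa using hd')
  let meets (d : Sym2 W) (e : Sym2 V) : Prop := ∃ v, v ∈ Sym2.map f d ∧ v ∈ e
  have hcount : ∑ d ∈ H.edgeFinset, c (Sym2.map f d) ≤ #G.edgeFinset * (2 * Δ) :=
    calc ∑ d ∈ H.edgeFinset, c (Sym2.map f d)
        ≤ ∑ d ∈ H.edgeFinset, #(G.edgeFinset.bipartiteAbove meets d) :=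
          sum_le_sum fun d hd ↦ hc.color_le_card_edges_meeting (hmap d hd)
      _ = ∑ e ∈ G.edgeFinset, #(H.edgeFinset.bipartiteBelow meets e) :=
          sum_card_bipartiteAbove_eq_sum_card_bipartiteBelow meets
      _ ≤ #G.edgeFinset * (2 * Δ) :=
          sum_le_card_nsmul _ _ _ fun e _ ↦ card_edges_map_meeting_le hΔ hf e
  have hsum := card_mul_succ_le_two_mul_sum hinj fun d hd ↦ hpos _ (hmap d hd)
  linarith

end LowerBound

section Matching

open Finset Function

variable {V : Type*} {G : SimpleGraph V} {c : Sym2 V → ℕ} {k : ℕ}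

lemma matchingGraph_adj {v w : Fin (2 * k)} :
    (matchingGraph k).Adj v w ↔ v ≠ w ∧ v.val / 2 = w.val / 2 := by
  grind [matchingGraph, SimpleGraph.fromRel_adj]

instance : DecidableRel (matchingGraph k).Adj := fun _ _ ↦ decidable_of_iff' _ matchingGraph_adj

lemma matchingGraph_isRegularOfDegree_one : (matchingGraph k).IsRegularOfDegree 1 := by
  intro v
  rw [SimpleGraph.degree_eq_one_iff_existsUnique_adj]
  refine ⟨⟨v + 1 - 2 * (v % 2), by omega⟩, ?_, fun w hw ↦ ?_⟩
  · simp only [matchingGraph_adj, ne_eq, Fin.ext_iff]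
    omega
  · simp only [matchingGraph_adj, ne_eq, Fin.ext_iff] at hw ⊢
    omega

lemma card_edgeFinset_matchingGraph : #(matchingGraph k).edgeFinset = k := by
  have := (matchingGraph k).sum_degrees_eq_twice_card_edges
  simp only [matchingGraph_isRegularOfDegree_one.degree_eq, sum_const, card_univ, Fintype.card_fin,
    smul_eq_mul, mul_one] at this
  omega

lemma HGood.mul_succ_le_four_mul_ncard_edgeSet (hG : HGood (matchingGraph k) G)
    (hfin : G.edgeSet.Finite) : k * (k + 1) ≤ 4 * G.edgeSet.ncard := by
  have := hfin.fintype
  have hbound := hG.card_edgeFinset_mul_succ_le fun v ↦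
    (matchingGraph_isRegularOfDegree_one.degree_eq v).le
  rwa [card_edgeFinset_matchingGraph, mul_one, SimpleGraph.edgeFinset,
    ← Set.ncard_eq_toFinset_card'] at hbound

lemma hasRainbowCopy_matchingGraph {p q : Fin k → V} (hpq : Injective (Sum.elim p q))
    (hadj : ∀ i, G.Adj (p i) (q i)) (hc : Injective fun i ↦ c s(p i, q i)) :
    HasRainbowCopy G (matchingGraph k) c := by
  let half (x : Fin (2 * k)) : Fin k := ⟨x / 2, by omega⟩
  let f (x : Fin (2 * k)) : V :=
    Sum.elim p q (if x.val % 2 = 0 then .inl (half x) else .inr (half x))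
  have hf : Injective f := by
    intro x y hxy
    have := hpq hxy
    grind
  have hedge : ∀ x y, (matchingGraph k).Adj x y → s(f x, f y) = s(p (half x), q (half x)) := by
    intro x y hxy
    simp only [matchingGraph_adj, ne_eq, Fin.ext_iff] at hxy
    have hhalf : half y = half x := Fin.ext hxy.2.symm
    obtain ⟨hx, hy⟩ | ⟨hx, hy⟩ :
        x.val % 2 = 0 ∧ y.val % 2 ≠ 0 ∨ x.val % 2 ≠ 0 ∧ y.val % 2 = 0 := by omega
    · simp only [f, hx, hy, hhalf, if_true, if_false, Sum.elim_inl, Sum.elim_inr]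
    · simp only [f, hx, hy, hhalf, if_true, if_false, Sum.elim_inl, Sum.elim_inr, Sym2.eq_swap]
  refine ⟨⟨f, fun {x y} hxy ↦ ?_⟩, hf, ?_⟩
  · rw [← SimpleGraph.mem_edgeSet, hedge x y hxy]
    exact hadj _
  · rintro ⟨x, y⟩ hxy ⟨x', y'⟩ hxy' hcol
    change c s(f x, f y) = c s(f x', f y') at hcol
    rw [hedge x y hxy, hedge x' y' hxy'] at hcol
    have hhalf : x.val / 2 = x'.val / 2 := congrArg Fin.val (hc hcol)
    simp only [SimpleGraph.mem_edgeSet, matchingGraph_adj, ne_eq, Fin.ext_iff] at hxy hxy'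
    simp only [Sym2.eq_iff, Fin.ext_iff]
    omega

end Matching

section Iso

variable {V V' W : Type*} {G : SimpleGraph V} {G' : SimpleGraph V'} {H : SimpleGraph W}

lemma HGood.of_iso (φ : G' ≃g G) (hG : HGood H G) : HGood H G' := by
  obtain ⟨c, hproper, hpos, ⟨f, hf, hrainbow⟩, hgood⟩ := hG
  have hedge (e : Sym2 V') : Sym2.map φ e ∈ G.edgeSet ↔ e ∈ G'.edgeSet := φ.map_mem_edgeSet_iff
  have hback (d : Sym2 W) : Sym2.map φ (Sym2.map (φ.symm.toHom.comp f) d) = Sym2.map f d := by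
    induction d with
    | _ x y => simp
  refine ⟨c ∘ Sym2.map φ, ?_, fun e he ↦ hpos _ ((hedge e).2 he),
    ⟨φ.symm.toHom.comp f, φ.symm.injective.comp hf, ?_⟩, ?_⟩
  · rintro e₁ h₁ e₂ h₂ hne ⟨v, hv₁, hv₂⟩
    exact hproper _ ((hedge e₁).2 h₁) _ ((hedge e₂).2 h₂) ((Sym2.map.injective φ.injective).ne hne)
      ⟨φ v, Sym2.mem_map.2 ⟨v, hv₁, rfl⟩, Sym2.mem_map.2 ⟨v, hv₂, rfl⟩⟩
  · simpa only [Function.comp_apply, hback] using hrainbow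
  · intro e he j hj hlt
    obtain ⟨e', he', hcol, v, hv, hv'⟩ := hgood _ ((hedge e).2 he) j hj hlt
    obtain ⟨e', rfl⟩ : e' ∈ Set.range (Sym2.map φ) := by
      induction e' with
      | _ x y => exact ⟨s(φ.symm x, φ.symm y), by simp⟩
    obtain ⟨v, rfl⟩ := φ.surjective v
    simp only [Sym2.mem_map, φ.injective.eq_iff, exists_eq_right] at hv hv'
    exact ⟨e', (hedge e').1 he', hcol, v, hv, hv'⟩

end Iso

section ColorMatrix

open Finset Function

variable {α β W : Type*} {H : SimpleGraph W} {g : α → β → ℕ}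

/-- The edge coloring of `α ⊕ β` with color matrix `g`. Pairs inside `α` or inside `β` get the
color `0`, which stands for an absent edge. -/
def entryColoring (g : α → β → ℕ) : Sym2 (α ⊕ β) → ℕ :=
  Sym2.lift ⟨fun
    | .inl a, .inr b | .inr b, .inl a => g a b
    | _, _ => 0, by rintro (_ | _) (_ | _) <;> rfl⟩

/-- The bipartite graph on `α ⊕ β` whose edges are the positions of the nonzero entries of `g`. -/
def supportGraph (g : α → β → ℕ) : SimpleGraph (α ⊕ β) :=
  SimpleGraph.fromEdgeSet (support (entryColoring g))

@[simp] lemma entryColoring_inl_inr (a : α) (b : β) :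
    entryColoring g s(.inl a, .inr b) = g a b := rfl

lemma supportGraph_adj_inl_inr {a : α} {b : β} :
    (supportGraph g).Adj (.inl a) (.inr b) ↔ g a b ≠ 0 := by
  simp [supportGraph]

lemma supportGraph_le_completeBipartiteGraph : supportGraph g ≤ completeBipartiteGraph α β := by
  rintro (a | b) (a' | b') h <;> simp_all [supportGraph, entryColoring]

lemma supportGraph_colorable_two : (supportGraph g).Colorable 2 :=
  (SimpleGraph.CompleteBipartiteGraph.bicoloring α β).colorable.mono_left
    supportGraph_le_completeBipartiteGraph

lemma mem_edgeSet_supportGraph {e : Sym2 (α ⊕ β)} :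
    e ∈ (supportGraph g).edgeSet ↔ ∃ a b, g a b ≠ 0 ∧ s(.inl a, .inr b) = e := by
  constructor
  · intro he
    obtain ⟨a | b, a' | b'⟩ := e <;> simp_all [supportGraph, entryColoring]
  · rintro ⟨a, b, hab, rfl⟩
    exact supportGraph_adj_inl_inr.2 hab

lemma ncard_edgeSet_supportGraph [Fintype α] [Fintype β] :
    (supportGraph g).edgeSet.ncard = ∑ b, #{a | g a b ≠ 0} := by
  have hinj : Injective fun x : β × α ↦ (s(.inl x.2, .inr x.1) : Sym2 (α ⊕ β)) := by
    rintro ⟨b, a⟩ ⟨b', a'⟩ h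
    simpa [and_comm] using h
  have himage : (supportGraph g).edgeSet =
      (fun x : β × α ↦ s(.inl x.2, .inr x.1)) '' {x | g x.2 x.1 ≠ 0} := by
    ext e
    rw [mem_edgeSet_supportGraph, exists_comm]
    simp
  rw [himage, Set.ncard_image_of_injective _ hinj, Set.ncard_eq_toFinset_card',
    Set.toFinset_ofPred, card_filter, Fintype.sum_prod_type]
  simp only [card_filter]

lemma isProperEdgeColoring_entryColoring
    (hrow : ∀ a b b', g a b ≠ 0 → g a b = g a b' → b = b')
    (hcol : ∀ a a' b, g a b ≠ 0 → g a b = g a' b → a = a') :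
    IsProperEdgeColoring (supportGraph g) (entryColoring g) := by
  rintro e₁ h₁ e₂ h₂ hne ⟨v, hv₁, hv₂⟩ heq
  obtain ⟨a, b, hab, rfl⟩ := mem_edgeSet_supportGraph.1 h₁
  obtain ⟨a', b', -, rfl⟩ := mem_edgeSet_supportGraph.1 h₂
  simp only [entryColoring_inl_inr] at heq
  obtain rfl | rfl : a = a' ∨ b = b' := by grind
  · exact hne (by rw [hrow a b b' hab heq])
  · exact hne (by rw [hcol a a' b hab heq])

lemma isHGoodColoring_entryColoring
    (hH : HasRainbowCopy (supportGraph g) H (entryColoring g))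
    (hrow : ∀ a b b', g a b ≠ 0 → g a b = g a b' → b = b')
    (hcol : ∀ a a' b, g a b ≠ 0 → g a b = g a' b → a = a')
    (hsmaller : ∀ a b j, 1 ≤ j → j < g a b → (∃ b', g a b' = j) ∨ ∃ a', g a' b = j) :
    IsHGoodColoring H (supportGraph g) (entryColoring g) := by
  refine ⟨isProperEdgeColoring_entryColoring hrow hcol, ?_, hH, ?_⟩
  · intro e he
    obtain ⟨a, b, hab, rfl⟩ := mem_edgeSet_supportGraph.1 he
    exact Nat.one_le_iff_ne_zero.2 hab
  · intro e he j hj hlt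
    obtain ⟨a, b, -, rfl⟩ := mem_edgeSet_supportGraph.1 he
    obtain ⟨b', rfl⟩ | ⟨a', rfl⟩ := hsmaller a b j hj hlt
    · exact ⟨s(.inl a, .inr b'), supportGraph_adj_inl_inr.2 (by omega), rfl, .inl a, by simp⟩
    · exact ⟨s(.inl a', .inr b), supportGraph_adj_inl_inr.2 (by omega), rfl, .inr b, by simp⟩

end ColorMatrix

section Staircase

open Finset Function

variable {k : ℕ}

/-- The color matrix of the extremal graph. Color `j + 1` on the diagonal is the rainbow matching;
the entries above the diagonal and the row `none` put the colors `1, …, 2 * j + 1 - k` into column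
`j`. Truncated subtraction turns the nonpositive ones into `0`, that is, into non-edges. -/
def staircase (k : ℕ) : Option (Fin k) → Fin k → ℕ
  | some i, j => if i = j then j + 1 else if i < j then i + j + 1 - k else 0
  | none, j => 2 * j + 1 - k

lemma staircase_row_injective (a : Option (Fin k)) (j j' : Fin k) (hj : staircase k a j ≠ 0)
    (h : staircase k a j = staircase k a j') : j = j' := by
  cases a <;> grind [staircase]

lemma staircase_col_injective (a a' : Option (Fin k)) (j : Fin k) (ha : staircase k a j ≠ 0)
    (h : staircase k a j = staircase k a' j) : a = a' := by
  cases a <;> cases a' <;> grind [staircase]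

lemma exists_staircase_eq_of_le_col {j : Fin k} {c : ℕ} (hc : 1 ≤ c) (hcj : c ≤ 2 * j + 1 - k) :
    ∃ a, staircase k a j = c := by
  obtain rfl | hlt := hcj.eq_or_lt
  · exact ⟨none, rfl⟩
  · refine ⟨some ⟨c + k - 1 - j, by omega⟩, ?_⟩
    grind [staircase]

lemma exists_staircase_eq_of_le_row {i : Fin k} {c : ℕ} (hic : 2 * i + 1 - k < c) (hci : c ≤ i) :
    ∃ j, staircase k (some i) j = c := by
  refine ⟨⟨c + k - 1 - i, by omega⟩, ?_⟩
  grind [staircase]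

lemma exists_staircase_eq_of_lt (a : Option (Fin k)) (j : Fin k) (c : ℕ) (hc : 1 ≤ c)
    (hlt : c < staircase k a j) :
    (∃ j', staircase k a j' = c) ∨ ∃ a', staircase k a' j = c := by
  by_cases hcj : c ≤ 2 * j + 1 - k
  · exact .inr (exists_staircase_eq_of_le_col hc hcj)
  · have hdiag : a = some j ∧ c ≤ j := by
      cases a <;> grind [staircase]
    obtain ⟨rfl, hci⟩ := hdiag
    exact .inl (exists_staircase_eq_of_le_row (by omega) hci)

lemma hasRainbowCopy_staircase :
    HasRainbowCopy (supportGraph (staircase k)) (matchingGraph k)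
      (entryColoring (staircase k)) := by
  have hdiag (i : Fin k) : staircase k (some i) i = i + 1 := by simp [staircase]
  refine hasRainbowCopy_matchingGraph (p := fun i ↦ .inl (some i)) (q := .inr) ?_ ?_ ?_
  · rintro (i | i) (j | j) <;> simp
  · intro i
    simp [supportGraph_adj_inl_inr, hdiag]
  · intro i j
    simp [hdiag, Fin.ext_iff]

theorem hGood_staircase : HGood (matchingGraph k) (supportGraph (staircase k)) :=
  ⟨_, isHGoodColoring_entryColoring hasRainbowCopy_staircase staircase_row_injective
    staircase_col_injective exists_staircase_eq_of_lt⟩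

lemma card_staircase_col_le (j : Fin k) :
    #{a | staircase k a j ≠ 0} ≤ (2 * j + 1 - k) + 1 := by
  have hinj : Set.InjOn (staircase k · j) {a | staircase k a j ≠ 0} :=
    fun a ha a' _ h ↦ staircase_col_injective a a' j ha h
  calc #{a | staircase k a j ≠ 0}
      = #(image (staircase k · j) {a | staircase k a j ≠ 0}) :=
        (card_image_of_injOn (by simpa using hinj)).symm
    _ ≤ #(insert (j + 1 : ℕ) (Icc 1 (2 * j + 1 - k : ℕ))) := by
        refine card_le_card (image_subset_iff.2 fun a ha ↦ ?_)
        cases a <;> grind [staircase]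
    _ ≤ (2 * j + 1 - k) + 1 := by simpa using card_insert_le (j + 1 : ℕ) (Icc 1 (2 * j + 1 - k))

lemma four_mul_sum_odd_sub_le (k n : ℕ) :
    4 * ∑ j ∈ range n, (2 * j + 1 - k) ≤ (2 * n - k) ^ 2 := by
  induction n with
  | zero => simp
  | succ n ih =>
    rw [sum_range_succ, mul_add]
    obtain h | h := Nat.lt_or_ge (2 * n) k
    · have h₀ : 2 * n - k = 0 := by omega
      have h₁ : 2 * n + 1 - k = 0 := by omega
      rw [h₀] at ih
      rw [h₁]
      linarith [Nat.zero_le ((2 * (n + 1) - k) ^ 2)]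
    · obtain ⟨m, hm⟩ := Nat.exists_eq_add_of_le h
      have h₀ : 2 * n - k = m := by omega
      have h₁ : 2 * n + 1 - k = m + 1 := by omega
      have h₂ : 2 * (n + 1) - k = m + 2 := by omega
      rw [h₀] at ih
      rw [h₁, h₂]
      linarith

theorem four_mul_ncard_edgeSet_staircase_le :
    4 * (supportGraph (staircase k)).edgeSet.ncard ≤ k ^ 2 + 4 * k :=
  calc 4 * (supportGraph (staircase k)).edgeSet.ncard
      ≤ 4 * ∑ j : Fin k, ((2 * j + 1 - k) + 1 : ℕ) := by
        rw [ncard_edgeSet_supportGraph]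
        gcongr with j
        exact card_staircase_col_le j
    _ = 4 * ∑ j ∈ range k, (2 * j + 1 - k) + 4 * k := by
        simp [sum_add_distrib, mul_add, Fin.sum_univ_eq_sum_range (fun j ↦ 2 * j + 1 - k)]
    _ ≤ k ^ 2 + 4 * k := by
        have := four_mul_sum_odd_sub_le k k
        rw [show 2 * k - k = k by omega] at this
        omega

end Staircase

theorem stmt_17 (k : ℕ) (hk : 1 ≤ k) :
    (∀ (V : Type) [Fintype V] (G : SimpleGraph V), HGood (matchingGraph k) G →
      (k : ℝ) ^ 2 / 4 ≤ (G.edgeSet.ncard : ℝ)) ∧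
    (∃ (n : ℕ) (G : SimpleGraph (Fin n)), G.Colorable 2 ∧ HGood (matchingGraph k) G ∧
      (G.edgeSet.ncard : ℝ) ≤ (k : ℝ) ^ 2 / 4 + k) := by
  constructor
  · intro V _ G hG
    have hcard : (k : ℝ) * (k + 1) ≤ 4 * G.edgeSet.ncard :=
      mod_cast hG.mul_succ_le_four_mul_ncard_edgeSet G.edgeSet.toFinite
    have : (0 : ℝ) ≤ k := k.cast_nonneg
    linarith
  · let φ := (supportGraph (staircase k)).overFinIso rfl
    refine ⟨_, _, supportGraph_colorable_two.of_hom φ.symm.toHom, hGood_staircase.of_iso φ.symm, ?_⟩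
    have hcard : 4 * ((supportGraph (staircase k)).edgeSet.ncard : ℝ) ≤ k ^ 2 + 4 * k :=
      mod_cast four_mul_ncard_edgeSet_staircase_le
    rw [← Set.ncard_congr' φ.mapEdgeSet]
    linarith
end

section
/- For every ε > 0 there exists n₀ such that for all n ≥ n₀, every K_n-good graph has at least (1−ε)·n³/6 edges, where K_n denotes the complete graph on n vertices. -/
open SimpleGraph

/-!
Let `A` be a rainbow `n`-clique and fix a color `j ≤ k.choose 2`. The edges of color `j` meet all
but at most `k - 1` vertices of `A`: if none of them meets the `t` vertices of `T ⊆ A`, then the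
greedy condition forces all `t.choose 2` distinct colors inside `T` to be smaller than `j`. On the
other hand, `m` edges of color `j` meet at most `m + 1` vertices of `A`, because only one of them
can lie inside `A`. Hence `m ≥ n - k`, and summing over the colors `1, …, n.choose 2` gives at
least `n.choose 3` edges.
-/

section Counting

open Finset

theorem choose_succ_le_sum_range_choose {n r : ℕ} {g : ℕ → ℕ}
    (hg : ∀ i k, i < k.choose r → n ≤ g i + k) :
    n.choose (r + 1) ≤ ∑ i ∈ range (n.choose r), g i := by
  induction n generalizing g with
  | zero => simp
  | succ n ih =>
    have one_le : ∀ i ∈ range (n.choose r), 1 ≤ g i := fun i hi => by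
      have := hg i n (mem_range.mp hi)
      lia
    calc (n + 1).choose (r + 1)
        = n.choose (r + 1) + n.choose r := by rw [Nat.choose_succ_succ', add_comm]
      _ ≤ ∑ i ∈ range (n.choose r), (g i - 1) + ∑ _i ∈ range (n.choose r), 1 := by
        gcongr
        · exact ih fun i k hik => by
            have := hg i k hik
            lia
        · simp
      _ = ∑ i ∈ range (n.choose r), g i := by
        rw [← sum_add_distrib]
        exact sum_congr rfl fun i hi => Nat.sub_add_cancel (one_le i hi)
      _ ≤ ∑ i ∈ range ((n + 1).choose r), g i :=
        sum_le_sum_of_subset (range_mono (Nat.choose_le_choose r n.le_succ))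

theorem sum_card_fiber_le_card {α β : Type*} [DecidableEq β] (s : Finset α) (t : Finset β)
    (f : α → β) : ∑ b ∈ t, #{a ∈ s | f a = b} ≤ #s := by
  simpa using sum_fiberwise_le_sum_of_sum_fiber_nonneg (s := s) (t := t) (g := f)
    (f := fun _ => 1) fun _ _ => Nat.zero_le _

theorem eventually_mul_pow_div_factorial_le_choose (k : ℕ) {ε : ℝ} (hε : 0 < ε) :
    ∀ᶠ n : ℕ in Filter.atTop, (1 - ε) * (n : ℝ) ^ k / k.factorial ≤ n.choose k := by
  filter_upwards [(isEquivalent_choose k).isLittleO.def hε] with n hn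
  have pow_nonneg : 0 ≤ (n : ℝ) ^ k / k.factorial := by positivity
  rw [Pi.sub_apply, Real.norm_eq_abs, Real.norm_of_nonneg pow_nonneg] at hn
  have := (abs_le.mp hn).1
  rw [mul_div_assoc]
  linarith

variable {V : Type*} [DecidableEq V]

theorem card_filter_mem_sym2_le (A : Finset V) (e : Sym2 V) :
    #{v ∈ A | v ∈ e} ≤ 1 + if e ∈ A.sym2 then 1 else 0 := by
  induction e with | _ x y
  have subset_pair : {v ∈ A | v ∈ s(x, y)} ⊆ ({x, y} : Finset V) := fun v hv => by
    simpa using (mem_filter.mp hv).2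
  split_ifs with he
  · exact (card_le_card subset_pair).trans card_le_two
  · refine card_le_one.mpr fun a ha b hb => ?_
    by_contra hab
    obtain ⟨haA, hae⟩ := mem_filter.mp ha
    obtain ⟨hbA, hbe⟩ := mem_filter.mp hb
    exact he ((Sym2.mem_and_mem_iff hab).mp ⟨hae, hbe⟩ ▸ mk_mem_sym2_iff.mpr ⟨haA, hbA⟩)

theorem card_filter_exists_mem_le (A : Finset V) (F : Finset (Sym2 V)) :
    #{v ∈ A | ∃ e ∈ F, v ∈ e} ≤ #F + #{e ∈ F | e ∈ A.sym2} :=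
  calc #{v ∈ A | ∃ e ∈ F, v ∈ e}
      = #(F.biUnion fun e => {v ∈ A | v ∈ e}) := by congr 1; grind
    _ ≤ ∑ e ∈ F, #{v ∈ A | v ∈ e} := card_biUnion_le
    _ ≤ ∑ e ∈ F, (1 + if e ∈ A.sym2 then 1 else 0) :=
      sum_le_sum fun e _ => card_filter_mem_sym2_le A e
    _ = #F + #{e ∈ F | e ∈ A.sym2} := by
      rw [sum_add_distrib, ← card_eq_sum_ones, card_filter]

end Counting

section GreedyColoring

open Finset

variable {V : Type*} {G : SimpleGraph V} {c : Sym2 V → ℕ} {A B : Finset V}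

/-- The colors produced by coloring the edges of `G` greedily: they are positive, and an edge of
color `i` shares an endpoint with an edge of each color `1 ≤ j < i`. Properness is a separate
condition and not part of this notion. -/
structure IsGreedyEdgeColoring (G : SimpleGraph V) (c : Sym2 V → ℕ) : Prop where
  pos : ∀ e ∈ G.edgeSet, 1 ≤ c e
  exists_adjacent : ∀ e ∈ G.edgeSet, ∀ j : ℕ, 1 ≤ j → j < c e →
    ∃ e' ∈ G.edgeSet, c e' = j ∧ ∃ v, v ∈ e ∧ v ∈ e'

/-- The vertex set of a rainbow complete subgraph of `G`, used in place of an embedding of `K_n`. -/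
structure IsRainbowClique (G : SimpleGraph V) (c : Sym2 V → ℕ) (A : Finset V) : Prop where
  isClique : G.IsClique A
  injOn : Set.InjOn c (G.edgeSet ∩ A.sym2)

/-- The edges of `G` of color `j`. -/
def edgeColorClass (G : SimpleGraph V) [Fintype G.edgeSet] (c : Sym2 V → ℕ) (j : ℕ) :
    Finset (Sym2 V) :=
  {e ∈ G.edgeFinset | c e = j}

theorem mem_edgeColorClass [Fintype G.edgeSet] {j : ℕ} {e : Sym2 V} :
    e ∈ edgeColorClass G c j ↔ e ∈ G.edgeSet ∧ c e = j := by
  simp [edgeColorClass]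

theorem HasRainbowCopy.exists_isRainbowClique {W : Type*} [Fintype W]
    (h : HasRainbowCopy G (⊤ : SimpleGraph W) c) :
    ∃ A : Finset V, #A = Fintype.card W ∧ IsRainbowClique G c A := by
  obtain ⟨f, hf, rainbow⟩ := h
  refine ⟨univ.map ⟨f, hf⟩, by simp, ?_, ?_⟩
  · simpa using G.isClique_range_copy_top ⟨f, hf⟩
  · have exists_preimage : ∀ e ∈ G.edgeSet ∩ (univ.map ⟨f, hf⟩).sym2,
        ∃ d ∈ (⊤ : SimpleGraph W).edgeSet, d.map f = e := by
      rintro ⟨x, y⟩ ⟨hxy, hmem⟩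
      simp only [mem_coe, mk_mem_sym2_iff, mem_map, mem_univ, true_and] at hmem
      obtain ⟨⟨a, rfl⟩, b, rfl⟩ := hmem
      exact ⟨s(a, b), fun hab => hxy.ne (congrArg f hab), rfl⟩
    intro e₁ he₁ e₂ he₂ hc
    obtain ⟨d₁, hd₁, rfl⟩ := exists_preimage e₁ he₁
    obtain ⟨d₂, hd₂, rfl⟩ := exists_preimage e₂ he₂
    rw [rainbow d₁ hd₁ d₂ hd₂ hc]

namespace IsRainbowClique

theorem subset (hA : IsRainbowClique G c A) (hBA : B ⊆ A) : IsRainbowClique G c B where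
  isClique := hA.isClique.subset hBA
  injOn := hA.injOn.mono (Set.inter_subset_inter_right _ (sym2_mono hBA))

theorem choose_card_two_le_card_of_mapsTo (hA : IsRainbowClique G c A) {K : Finset ℕ}
    (hK : Set.MapsTo c (G.edgeSet ∩ A.sym2) K) : (#A).choose 2 ≤ #K := by
  classical
  have subset_edges : (A.offDiag.image Sym2.mk.uncurry : Set (Sym2 V)) ⊆ G.edgeSet ∩ A.sym2 := by
    intro e he
    simp only [coe_image, Set.mem_image, mem_coe, mem_offDiag] at he
    obtain ⟨⟨x, y⟩, ⟨hx, hy, hxy⟩, rfl⟩ := he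
    exact ⟨hA.isClique hx hy hxy, mk_mem_sym2_iff.mpr ⟨hx, hy⟩⟩
  rw [← Sym2.card_image_offDiag]
  exact card_le_card_of_injOn c (hK.mono_left (by simpa using subset_edges))
    (hA.injOn.mono (by simpa using subset_edges))

variable [Fintype G.edgeSet]

theorem card_edgeColorClass_inside_le_one [DecidableEq V] (hA : IsRainbowClique G c A) (j : ℕ) :
    #{e ∈ edgeColorClass G c j | e ∈ A.sym2} ≤ 1 := by
  refine card_le_one.mpr fun e₁ h₁ e₂ h₂ => ?_
  simp only [mem_filter, mem_edgeColorClass] at h₁ h₂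
  exact hA.injOn ⟨h₁.1.1, h₁.2⟩ ⟨h₂.1.1, h₂.2⟩ (h₁.1.2.trans h₂.1.2.symm)

theorem choose_card_two_lt_of_forall_notMem (hA : IsRainbowClique G c A)
    (hc : IsGreedyEdgeColoring G c) {j : ℕ} (hj : 1 ≤ j)
    (huncovered : ∀ v ∈ A, ∀ e ∈ edgeColorClass G c j, v ∉ e) : (#A).choose 2 < j := by
  have color_mem : Set.MapsTo c (G.edgeSet ∩ A.sym2) (Ioo 0 j) := by
    rintro e ⟨heG, heA⟩
    have mem_of_mem : ∀ v ∈ e, v ∈ A := mem_sym2_iff.mp heA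
    refine mem_coe.mpr (mem_Ioo.mpr ⟨hc.pos e heG, ?_⟩)
    by_contra! hle
    obtain ⟨e', he', hce', v, hve, hve'⟩ : ∃ e' ∈ G.edgeSet, c e' = j ∧ ∃ v, v ∈ e ∧ v ∈ e' := by
      obtain rfl | hlt := hle.eq_or_lt
      · exact ⟨e, heG, rfl, e.out.1, e.out_fst_mem, e.out_fst_mem⟩
      · exact hc.exists_adjacent e heG j hj hlt
    exact huncovered v (mem_of_mem v hve) e' (mem_edgeColorClass.mpr ⟨he', hce'⟩) hve'
  have := hA.choose_card_two_le_card_of_mapsTo color_mem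
  rw [Nat.card_Ioo] at this
  lia

theorem card_le_card_edgeColorClass_add (hA : IsRainbowClique G c A)
    (hc : IsGreedyEdgeColoring G c) {j k : ℕ} (hj : 1 ≤ j) (hjk : j ≤ k.choose 2) :
    #A ≤ #(edgeColorClass G c j) + k := by
  classical
  set F := edgeColorClass G c j
  set covered := {v ∈ A | ∃ e ∈ F, v ∈ e}
  set uncovered := {v ∈ A | ¬∃ e ∈ F, v ∈ e}
  have card_covered : #covered ≤ #F + 1 :=
    (card_filter_exists_mem_le A F).trans
      (Nat.add_le_add_left (hA.card_edgeColorClass_inside_le_one j) _)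
  have card_uncovered : #uncovered < k := by
    have choose_lt : (#uncovered).choose 2 < j :=
      (hA.subset (filter_subset _ A)).choose_card_two_lt_of_forall_notMem hc hj
        fun v hv e he hve => (mem_filter.mp hv).2 ⟨e, he, hve⟩
    by_contra! hle
    exact (choose_lt.trans_le hjk).not_ge (Nat.choose_le_choose 2 hle)
  have card_add : #covered + #uncovered = #A := card_filter_add_card_filter_not _
  lia

theorem choose_card_three_le_card_edgeFinset (hA : IsRainbowClique G c A)
    (hc : IsGreedyEdgeColoring G c) : (#A).choose 3 ≤ #G.edgeFinset :=
  calc (#A).choose 3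
      ≤ ∑ i ∈ range ((#A).choose 2), #(edgeColorClass G c (i + 1)) :=
        choose_succ_le_sum_range_choose fun i _ hik =>
          hA.card_le_card_edgeColorClass_add hc i.succ_pos hik
    _ = ∑ j ∈ (range ((#A).choose 2)).map (addRightEmbedding 1), #(edgeColorClass G c j) := by
        simp only [sum_map, addRightEmbedding_apply]
    _ ≤ #G.edgeFinset := sum_card_fiber_le_card _ _ c

end IsRainbowClique

end GreedyColoring

theorem stmt_18_general {V W : Type*} [Fintype W] {G : SimpleGraph V} {c : Sym2 V → ℕ}
    (hc : IsGreedyEdgeColoring G c) (hK : HasRainbowCopy G (⊤ : SimpleGraph W) c) :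
    ((Fintype.card W).choose 3 : ℕ∞) ≤ G.edgeSet.encard := by
  obtain hfin | hinf := G.edgeSet.finite_or_infinite
  · have := hfin.fintype
    obtain ⟨A, hcard, hA⟩ := hK.exists_isRainbowClique
    rw [← coe_edgeFinset, Set.encard_coe_eq_coe_finsetCard, ← hcard]
    exact_mod_cast hA.choose_card_three_le_card_edgeFinset hc
  · simp only [hinf.encard_eq, le_top]

theorem stmt_18 (ε : ℝ) (hε : 0 < ε) :
    ∃ n₀ : ℕ, ∀ n : ℕ, n₀ ≤ n →
      ∀ (V : Type) [Fintype V] (G : SimpleGraph V),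
        HGood (⊤ : SimpleGraph (Fin n)) G →
        (1 - ε) * (n : ℝ) ^ 3 / 6 ≤ (G.edgeSet.ncard : ℝ) := by
  obtain ⟨n₀, hn₀⟩ :=
    Filter.eventually_atTop.mp (eventually_mul_pow_div_factorial_le_choose 3 hε)
  refine ⟨n₀, fun n hn V _ G ⟨c, _, hpos, hK, hadj⟩ => ?_⟩
  have choose_le : n.choose 3 ≤ G.edgeSet.ncard := by
    have := stmt_18_general ⟨hpos, hadj⟩ hK
    rw [← G.edgeSet.toFinite.cast_ncard_eq, Fintype.card_fin] at this
    exact_mod_cast this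
  calc (1 - ε) * (n : ℝ) ^ 3 / 6 ≤ (n.choose 3 : ℝ) := by
        simpa [Nat.factorial] using hn₀ n hn
    _ ≤ (G.edgeSet.ncard : ℝ) := mod_cast choose_le
end

section
/- For every ε > 0 there exists n₀ such that for all n ≥ n₀ there exists a K_n-good graph with at most (1+ε)·n³/6 edges, where K_n denotes the complete graph on n vertices. -/
open SimpleGraph

/-! Color the edges of `K_n` by `1, 2, …` in colexicographic order, so that the edges from the
vertex `k` to smaller vertices receive exactly the colors from `k.choose 2 + 1` to
`(k + 1).choose 2`. This is rainbow, and to make it good it is enough that the colors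
`1, …, k.choose 2` also occur at `k`. They are all smaller than the colors of `K_n` at `k`, so they
can be put on pendant edges at `k`. The result has
`n.choose 2 + ∑ k < n, k.choose 2 = (n + 1).choose 3 = (n ^ 3 - n) / 6` edges. -/

section Leaves

variable {V : Type*} {G : SimpleGraph V} {c : Sym2 V → ℕ} {d : V → ℕ}

/-- The edge that joins the leaf `l`, one of the `d l.1` leaves hanging at `l.1`, to `l.1`. -/
def leafEdge (l : Σ v, Fin (d v)) : Sym2 (V ⊕ Σ v, Fin (d v)) :=
  s(.inl l.1, .inr l)

/-- The graph obtained from `G` by hanging `d v` new leaves at every vertex `v`. -/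
def withLeaves (G : SimpleGraph V) (d : V → ℕ) : SimpleGraph (V ⊕ Σ v, Fin (d v)) :=
  G.map Function.Embedding.inl ⊔ fromEdgeSet (Set.range leafEdge)

/-- The extension of an edge coloring `c` of `G` to `withLeaves G d` in which the leaf edges at
`v` receive the colors `1, …, d v`. Pairs of leaves, which are never edges, get the color `0`. -/
def leafColoring (c : Sym2 V → ℕ) (d : V → ℕ) : Sym2 (V ⊕ Σ v, Fin (d v)) → ℕ :=
  Sym2.lift ⟨fun
    | .inl v, .inl w => c s(v, w)
    | .inl _, .inr l => l.2 + 1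
    | .inr l, .inl _ => l.2 + 1
    | .inr _, .inr _ => 0, by
      rintro (v | l) (w | l')
      exacts [congrArg c Sym2.eq_swap, rfl, rfl, rfl]⟩

lemma leafColoring_map_inl (e : Sym2 V) : leafColoring c d (e.map .inl) = c e :=
  e.ind fun _ _ => rfl

lemma leafColoring_leafEdge (l : Σ v, Fin (d v)) : leafColoring c d (leafEdge l) = l.2 + 1 :=
  rfl

lemma inl_mem_map_inl {v : V} {e : Sym2 V} :
    (.inl v : V ⊕ Σ v, Fin (d v)) ∈ e.map .inl ↔ v ∈ e := by
  simp

lemma inl_mem_leafEdge {v : V} {l : Σ v, Fin (d v)} : .inl v ∈ leafEdge l ↔ v = l.1 := by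
  simp [leafEdge]

lemma inr_mem_leafEdge {l l' : Σ v, Fin (d v)} : .inr l ∈ leafEdge l' ↔ l = l' := by
  simp [leafEdge]

lemma leafEdge_injective : Function.Injective (leafEdge (d := d)) := fun _ _ h =>
  inr_mem_leafEdge.mp (h ▸ inr_mem_leafEdge.mpr rfl)

lemma edgeSet_withLeaves :
    (withLeaves G d).edgeSet = Sym2.map .inl '' G.edgeSet ∪ Set.range leafEdge := by
  have hdiag : Set.range (leafEdge (d := d)) \ Sym2.diagSet = Set.range leafEdge := by
    rw [sdiff_eq_left, Set.disjoint_left]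
    rintro _ ⟨l, rfl⟩
    simp [leafEdge]
  rw [withLeaves, edgeSet_sup, edgeSet_map, edgeSet_fromEdgeSet, hdiag]
  rfl

lemma ncard_edgeSet_withLeaves [Fintype V] :
    (withLeaves G d).edgeSet.ncard = G.edgeSet.ncard + ∑ v, d v := by
  have hdisj : Disjoint (Sym2.map .inl '' G.edgeSet) (Set.range (leafEdge (d := d))) := by
    rw [Set.disjoint_left]
    rintro _ ⟨e, -, rfl⟩ ⟨l, hl⟩
    have hmem : (.inr l : V ⊕ Σ v, Fin (d v)) ∈ e.map .inl := hl ▸ inr_mem_leafEdge.mpr rfl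
    simp at hmem
  rw [edgeSet_withLeaves, Set.ncard_union_eq hdisj,
    Set.ncard_image_of_injective _ (Sym2.map.injective Sum.inl_injective),
    Set.ncard_range_of_injective leafEdge_injective]
  simp

lemma isProperEdgeColoring_leafColoring (hc : IsProperEdgeColoring G c)
    (hlt : ∀ e ∈ G.edgeSet, ∀ v ∈ e, d v < c e) :
    IsProperEdgeColoring (withLeaves G d) (leafColoring c d) := by
  have hleaf (e) (he : e ∈ G.edgeSet) (l : Σ v, Fin (d v)) (x) (hxe : x ∈ e.map .inl)
      (hxl : x ∈ leafEdge l) : c e ≠ l.2 + 1 := by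
    obtain ⟨v, hv, rfl⟩ := Sym2.mem_map.mp hxe
    obtain rfl := inl_mem_leafEdge.mp hxl
    have := hlt e he _ hv
    lia
  unfold IsProperEdgeColoring
  rw [edgeSet_withLeaves]
  rintro _ (⟨e, he, rfl⟩ | ⟨l, rfl⟩) _ (⟨e', he', rfl⟩ | ⟨l', rfl⟩) hne ⟨x, hx, hx'⟩ <;>
    simp only [leafColoring_map_inl, leafColoring_leafEdge]
  · obtain ⟨v, hv, rfl⟩ := Sym2.mem_map.mp hx
    exact hc e he e' he' (ne_of_apply_ne _ hne) ⟨v, hv, inl_mem_map_inl.mp hx'⟩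
  · exact hleaf e he l' x hx hx'
  · exact (hleaf e' he' l x hx' hx).symm
  · intro hcol
    apply hne
    rcases x with v | k
    · obtain ⟨w, i⟩ := l
      obtain ⟨w', i'⟩ := l'
      obtain rfl : v = w := inl_mem_leafEdge.mp hx
      obtain rfl : v = w' := inl_mem_leafEdge.mp hx'
      obtain rfl : i = i' := Fin.ext (Nat.succ_injective hcol)
      rfl
    · rw [← inr_mem_leafEdge.mp hx, ← inr_mem_leafEdge.mp hx']

lemma hasRainbowCopy_leafColoring (hc : Set.InjOn c G.edgeSet) :
    HasRainbowCopy (withLeaves G d) G (leafColoring c d) := by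
  have hmap (e) (he : e ∈ G.edgeSet) : e.map .inl ∈ (withLeaves G d).edgeSet := by
    rw [edgeSet_withLeaves]
    exact .inl ⟨e, he, rfl⟩
  refine ⟨⟨.inl, fun {v w} h => hmap s(v, w) h⟩, Sum.inl_injective, fun e he e' he' h => ?_⟩
  exact hc he he' (by
    change leafColoring c d (e.map .inl) = leafColoring c d (e'.map .inl) at h
    simpa only [leafColoring_map_inl] using h)

/-- Every color below `c e` has to occur at an endpoint of `e`: the leaf edges at `v` supply the
colors up to `d v`, so `G` itself only has to supply the ones between `d v` and `c e`. -/
lemma isHGoodColoring_leafColoring (hc : Set.InjOn c G.edgeSet)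
    (hlt : ∀ e ∈ G.edgeSet, ∀ v ∈ e, d v < c e)
    (hcov : ∀ e ∈ G.edgeSet, ∃ v ∈ e, ∀ j, d v < j → j < c e →
      ∃ e' ∈ G.edgeSet, c e' = j ∧ v ∈ e') :
    IsHGoodColoring G (withLeaves G d) (leafColoring c d) := by
  have hproper : IsProperEdgeColoring G c := fun e he e' he' hne _ h => hne (hc he he' h)
  have hleaf (v : V) (j : ℕ) (hj : 1 ≤ j) (hjd : j ≤ d v) :
      ∃ e' ∈ (withLeaves G d).edgeSet, leafColoring c d e' = j ∧ .inl v ∈ e' := by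
    refine ⟨leafEdge ⟨v, j - 1, by lia⟩, ?_, ?_, inl_mem_leafEdge.mpr rfl⟩
    · exact edgeSet_withLeaves ▸ .inr ⟨_, rfl⟩
    · exact Nat.sub_add_cancel hj
  refine ⟨isProperEdgeColoring_leafColoring hproper hlt, ?_, hasRainbowCopy_leafColoring hc, ?_⟩
  · rw [edgeSet_withLeaves]
    rintro _ (⟨e, he, rfl⟩ | ⟨l, rfl⟩)
    · rw [leafColoring_map_inl]
      exact Nat.one_le_of_lt (hlt e he _ e.out_fst_mem)
    · exact Nat.le_add_left 1 _
  · intro e he j hj hje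
    rw [edgeSet_withLeaves] at he
    rcases he with ⟨e, he, rfl⟩ | ⟨l, rfl⟩
    · rw [leafColoring_map_inl] at hje
      obtain ⟨v, hv, hcov⟩ := hcov e he
      rcases le_or_gt j (d v) with hjd | hjd
      · obtain ⟨e', he', hcol, hmem⟩ := hleaf v j hj hjd
        exact ⟨e', he', hcol, .inl v, inl_mem_map_inl.mpr hv, hmem⟩
      · obtain ⟨e', he', hcol, hmem⟩ := hcov j hjd hje
        refine ⟨e'.map .inl, edgeSet_withLeaves ▸ .inl ⟨e', he', rfl⟩, ?_, .inl v, ?_, ?_⟩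
        · rw [leafColoring_map_inl, hcol]
        · exact inl_mem_map_inl.mpr hv
        · exact inl_mem_map_inl.mpr hmem
    · rw [leafColoring_leafEdge] at hje
      obtain ⟨e', he', hcol, hmem⟩ := hleaf l.1 j hj (by lia)
      exact ⟨e', he', hcol, .inl l.1, inl_mem_leafEdge.mpr rfl, hmem⟩

end Leaves

section Iso

variable {U V W : Type*} {H : SimpleGraph U} {G : SimpleGraph V} {G' : SimpleGraph W}

lemma IsHGoodColoring.comp_iso {c : Sym2 V → ℕ} (hc : IsHGoodColoring H G c) (φ : G' ≃g G) :
    IsHGoodColoring H G' (c ∘ Sym2.map φ) := by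
  obtain ⟨hproper, hpos, ⟨f, hf, hrainbow⟩, hbelow⟩ := hc
  have hmap (e) : e.map φ ∈ G.edgeSet ↔ e ∈ G'.edgeSet := φ.toEmbedding.map_mem_edgeSet_iff
  have hinj : Function.Injective (Sym2.map φ) := Sym2.map.injective φ.injective
  refine ⟨?_, fun e he => hpos _ ((hmap e).mpr he), ?_, ?_⟩
  · rintro e he e' he' hne ⟨v, hv, hv'⟩
    exact hproper _ ((hmap e).mpr he) _ ((hmap e').mpr he') (hinj.ne hne)
      ⟨φ v, Sym2.mem_map.mpr ⟨v, hv, rfl⟩, Sym2.mem_map.mpr ⟨v, hv', rfl⟩⟩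
  · refine ⟨φ.symm.toHom.comp f, φ.symm.injective.comp hf, fun e he e' he' h => ?_⟩
    refine hrainbow e he e' he' ?_
    simpa [Sym2.map_map, Function.comp_def] using h
  · intro e he j hj hje
    obtain ⟨e', he', hcol, v, hv, hv'⟩ := hbelow _ ((hmap e).mpr he) j hj hje
    obtain ⟨e', rfl⟩ : ∃ e'', Sym2.map φ e'' = e' := ⟨e'.map φ.symm, by simp [Sym2.map_map]⟩
    obtain ⟨w, hw, rfl⟩ := Sym2.mem_map.mp hv
    obtain ⟨w', hw', hww'⟩ := Sym2.mem_map.mp hv'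
    obtain rfl := φ.injective hww'
    exact ⟨e', (hmap e').mp he', hcol, w', hw, hw'⟩

lemma HGood.exists_fin_ncard_edgeSet_eq [Finite V] (hG : HGood H G) :
    ∃ (m : ℕ) (G' : SimpleGraph (Fin m)), HGood H G' ∧ G'.edgeSet.ncard = G.edgeSet.ncard := by
  have := Fintype.ofFinite V
  let φ : G ≃g G.overFin rfl := G.overFinIso rfl
  obtain ⟨c, hc⟩ := hG
  exact ⟨_, _, ⟨_, hc.comp_iso φ.symm⟩, (Nat.card_congr φ.mapEdgeSet).symm⟩

end Iso

section Colex

variable {n : ℕ}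

/-- The edge coloring of `K_n` that numbers the edges `{x < y}` by `1, 2, …` in colexicographic
order, so that the edges with larger endpoint `y` occupy the `y` colors just above
`y.choose 2`. -/
def colexColoring (e : Sym2 (Fin n)) : ℕ :=
  (e.sup : ℕ).choose 2 + e.inf + 1

lemma colexColoring_mk {x y : Fin n} (h : x < y) :
    colexColoring s(x, y) = (y : ℕ).choose 2 + x + 1 := by
  simp [colexColoring, h.le]

lemma exists_lt_eq_mk_of_mem_edgeSet {V : Type*} [LinearOrder V] {G : SimpleGraph V} {e : Sym2 V}
    (he : e ∈ G.edgeSet) : ∃ x y, x < y ∧ e = s(x, y) := by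
  induction e with | _ x y
  rcases lt_or_gt_of_ne (G.ne_of_adj he) with h | h
  exacts [⟨x, y, h, rfl⟩, ⟨y, x, h, Sym2.eq_swap⟩]

lemma choose_two_add_lt_choose_two {x y z : ℕ} (hxy : x < y) (hyz : y < z) :
    y.choose 2 + x < z.choose 2 :=
  calc y.choose 2 + x < y.choose 2 + y := by lia
    _ = (y + 1).choose 2 := by rw [Nat.choose_succ_succ' y 1, Nat.choose_one_right, add_comm]
    _ ≤ z.choose 2 := Nat.choose_le_choose 2 hyz

lemma injOn_colexColoring : Set.InjOn colexColoring (⊤ : SimpleGraph (Fin n)).edgeSet := by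
  intro e he e' he' h
  obtain ⟨x, y, hxy, rfl⟩ := exists_lt_eq_mk_of_mem_edgeSet he
  obtain ⟨x', y', hxy', rfl⟩ := exists_lt_eq_mk_of_mem_edgeSet he'
  rw [colexColoring_mk hxy, colexColoring_mk hxy'] at h
  rcases lt_trichotomy y y' with hy | rfl | hy
  · have := choose_two_add_lt_choose_two hxy hy
    lia
  · obtain rfl : x = x' := Fin.ext (by lia)
    rfl
  · have := choose_two_add_lt_choose_two hxy' hy
    lia

lemma choose_two_lt_colexColoring {v : Fin n} {e : Sym2 (Fin n)} (hv : v ∈ e) :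
    (v : ℕ).choose 2 < colexColoring e := by
  have hle : v ≤ e.sup := by
    induction e with | _ x y
    rcases Sym2.mem_iff.mp hv with rfl | rfl
    exacts [le_sup_left, le_sup_right]
  have := Nat.choose_le_choose 2 hle
  unfold colexColoring
  lia

lemma exists_colexColoring_eq_of_lt {x y : Fin n} (hxy : x < y) {j : ℕ}
    (hj : (y : ℕ).choose 2 < j) (hjc : j < colexColoring s(x, y)) :
    ∃ e ∈ (⊤ : SimpleGraph (Fin n)).edgeSet, colexColoring e = j ∧ y ∈ e := by
  rw [colexColoring_mk hxy] at hjc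
  let z : Fin n := ⟨j - (y : ℕ).choose 2 - 1, by lia⟩
  have hzy : z < y := Fin.lt_def.mpr (by simp only [z]; lia)
  refine ⟨s(z, y), hzy.ne, ?_, Sym2.mem_mk_right z y⟩
  rw [colexColoring_mk hzy]
  simp only [z]
  lia

lemma isHGoodColoring_leafColoring_colexColoring :
    IsHGoodColoring (⊤ : SimpleGraph (Fin n)) (withLeaves ⊤ fun k : Fin n => (k : ℕ).choose 2)
      (leafColoring colexColoring fun k => (k : ℕ).choose 2) := by
  refine isHGoodColoring_leafColoring injOn_colexColoring
    (fun _ _ _ => choose_two_lt_colexColoring) fun e he => ?_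
  obtain ⟨x, y, hxy, rfl⟩ := exists_lt_eq_mk_of_mem_edgeSet he
  exact ⟨y, Sym2.mem_mk_right x y, fun _ => exists_colexColoring_eq_of_lt hxy⟩

end Colex

lemma sum_range_choose_eq_choose_succ (n k : ℕ) :
    ∑ i ∈ Finset.range n, i.choose k = n.choose (k + 1) := by
  cases n with
  | zero => simp
  | succ n =>
    rw [← Nat.sum_Icc_choose]
    exact (Finset.sum_subset (by grind) fun i _ _ => Nat.choose_eq_zero_of_lt (by grind)).symm

lemma ncard_edgeSet_withLeaves_top_choose_two (n : ℕ) :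
    (withLeaves (⊤ : SimpleGraph (Fin n)) fun k => (k : ℕ).choose 2).edgeSet.ncard
      = (n + 1).choose 3 := by
  have htop : (⊤ : SimpleGraph (Fin n)).edgeSet.ncard = n.choose 2 := by
    rw [← coe_edgeFinset, Set.ncard_coe_finset, card_edgeFinset_top_eq_card_choose_two,
      Fintype.card_fin]
  rw [ncard_edgeSet_withLeaves, htop, Fin.sum_univ_eq_sum_range (Nat.choose · 2),
    sum_range_choose_eq_choose_succ, Nat.choose_succ_succ' n 2]

lemma cast_add_one_choose_three_le (n : ℕ) : ((n + 1).choose 3 : ℝ) ≤ (n : ℝ) ^ 3 / 6 := by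
  have h : ((n + 1 : ℕ) : ℝ) * n.choose 2 = (n + 1).choose 3 * (3 : ℕ) := by
    exact_mod_cast Nat.add_one_mul_choose_eq n 2
  rw [Nat.cast_choose_two] at h
  push_cast at h
  linarith [Nat.cast_nonneg (α := ℝ) n]

theorem stmt_19_general (n : ℕ) :
    ∃ (m : ℕ) (G : SimpleGraph (Fin m)), HGood (⊤ : SimpleGraph (Fin n)) G ∧
      (G.edgeSet.ncard : ℝ) ≤ (n : ℝ) ^ 3 / 6 := by
  obtain ⟨m, G, hG, hcard⟩ :=
    HGood.exists_fin_ncard_edgeSet_eq ⟨_, isHGoodColoring_leafColoring_colexColoring (n := n)⟩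
  rw [ncard_edgeSet_withLeaves_top_choose_two] at hcard
  exact ⟨m, G, hG, hcard ▸ cast_add_one_choose_three_le n⟩

theorem stmt_19 (ε : ℝ) (hε : 0 < ε) :
    ∃ n₀ : ℕ, ∀ n : ℕ, n₀ ≤ n →
      ∃ (m : ℕ) (G : SimpleGraph (Fin m)), HGood (⊤ : SimpleGraph (Fin n)) G ∧
        (G.edgeSet.ncard : ℝ) ≤ (1 + ε) * (n : ℝ) ^ 3 / 6 := by
  refine ⟨0, fun n _ => (stmt_19_general n).imp fun _ => .imp fun _ hG => ⟨hG.1, hG.2.trans ?_⟩⟩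
  linarith [show 0 ≤ ε * (n : ℝ) ^ 3 by positivity]
end
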